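/- arXiv:math/0306246 — 5 statements merged into one kernel-verified Lean document; each statement's English description precedes it below -/
import Mathlib

section
/- Let n : ℕ → ℕ be a function. For each d, let X_{d,n(d)} be an n(d)-element subset of {0,1}^d chosen uniformly at random, let P_{d,n(d)} := conv(X_{d,n(d)}) be its convex hull, and let Δ_{d,n(d)} be the density of the graph of P_{d,n(d)}. If there exists ε > 0 such that n(d) ≥ (√2 + ε)^d for all sufficiently large d, then lim_{d→∞} E[Δ_{d,n(d)}] = 0. -/
open Finset Filter MeasureTheory

open scoped Classical

noncomputable section

/-- The vertex set `{0,1}^d` of the 0/1-cube, as a finite subset of `ℝ^d`. -/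
def cube01 (d : ℕ) : Finset (Fin d → ℝ) :=
  (Finset.univ : Finset (Fin d → Bool)).image (fun f i => if f i then 1 else 0)

/-- The vertex set `{-1,+1}^d` of the `±1`-cube, as a finite subset of `ℝ^d`. -/
def pmCube (d : ℕ) : Finset (Fin d → ℝ) :=
  (Finset.univ : Finset (Fin d → Bool)).image (fun f i => if f i then 1 else -1)

/-- The all-one vector `𝟙 ∈ ℝ^d`. -/
def allOne (d : ℕ) : Fin d → ℝ := fun _ => 1

/-- `C^d_* = {-1,+1}^d \ {-𝟙, 𝟙}`. -/
def pmCubeStar (d : ℕ) : Finset (Fin d → ℝ) :=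
  (pmCube d) \ {-(allOne d), allOne d}

/-- `{v,w}` spans an edge (a one-dimensional face) of the polytope `P`:
`v ≠ w` and the segment `[v,w]` is an (exposed) face of `P`. -/
def IsEdge {d : ℕ} (P : Set (Fin d → ℝ)) (v w : Fin d → ℝ) : Prop :=
  v ≠ w ∧ IsExposed ℝ P (segment ℝ v w)

/-- The number of edges of the graph of the polytope `conv X`. -/
noncomputable def edgeCount {d : ℕ} (X : Finset (Fin d → ℝ)) : ℕ :=
  ((X.powersetCard 2).filter (fun e =>
      ∃ v w, e = {v, w} ∧ IsEdge (convexHull ℝ (X : Set (Fin d → ℝ))) v w)).card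

/-- The density of the graph of the polytope `conv X` (whose vertex set is `X`
when `X` consists of 0/1- or `±1`-points): number of edges divided by `C(|X|,2)`. -/
noncomputable def graphDensity {d : ℕ} (X : Finset (Fin d → ℝ)) : ℝ :=
  (edgeCount X : ℝ) / (X.card.choose 2 : ℝ)

/-- The expected graph-density of the convex hull of a uniformly random
`n`-element subset of `{0,1}^d`. -/
noncomputable def expDensity (d n : ℕ) : ℝ :=
  (∑ X ∈ (cube01 d).powersetCard n, graphDensity X) /
    (((cube01 d).powersetCard n).card : ℝ)

/-- The Hamming distance of `v, w ∈ ℝ^d`. -/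
def hdist {d : ℕ} (v w : Fin d → ℝ) : ℕ :=
  (Finset.univ.filter (fun i => v i ≠ w i)).card

/-- `C(v,w)`: the points of the `±1`-cube agreeing with `v` and `w` wherever these agree
(the vertex set of the smallest face of the cube containing `v` and `w`). -/
def cubeFace {d : ℕ} (v w : Fin d → ℝ) : Finset (Fin d → ℝ) :=
  (pmCube d).filter (fun x => ∀ i, v i = w i → x i = v i)

/-- `C_*(v,w) = C(v,w) \ {v,w}`. -/
def cubeFaceStar {d : ℕ} (v w : Fin d → ℝ) : Finset (Fin d → ℝ) :=
  (cubeFace v w) \ {v, w}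

/-- The long-edge probability `τ(k,m)`: the probability that for a uniformly random
`m`-element subset `Y ⊆ C^k_*`, `conv Y ∩ conv{-𝟙,𝟙} = ∅`. -/
noncomputable def tau (k m : ℕ) : ℝ :=
  ((((pmCubeStar k).powersetCard m).filter (fun Y =>
      convexHull ℝ (Y : Set (Fin k → ℝ)) ∩ segment ℝ (-(allOne k)) (allOne k) = ∅)).card : ℝ) /
    ((((pmCubeStar k).powersetCard m)).card : ℝ)

/-- `Y ∩ (-Y) = ∅`. -/
def NoAntipodal {k : ℕ} (Y : Finset (Fin k → ℝ)) : Prop := ∀ y ∈ Y, -y ∉ Y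

/-- `α(k,m)`: the conditional probability that `conv Y ∩ conv{-𝟙,𝟙} = ∅`
given `Y ∩ (-Y) = ∅`, for a uniformly random `m`-element subset `Y ⊆ C^k_*`. -/
noncomputable def alpha (k m : ℕ) : ℝ :=
  ((((pmCubeStar k).powersetCard m).filter (fun (Y : Finset (Fin k → ℝ)) =>
      convexHull ℝ (Y : Set (Fin k → ℝ)) ∩ segment ℝ (-(allOne k)) (allOne k) = ∅ ∧
        NoAntipodal Y)).card : ℝ) /
    ((((pmCubeStar k).powersetCard m).filter (fun Y => NoAntipodal Y)).card : ℝ)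

/-- The sample space for a uniformly random `n`-element subset `X ⊆ {-1,+1}^d`
together with a uniformly random `2`-element subset `{v,w} ⊆ X`. -/
def edgeSpace (d n : ℕ) : Finset (Finset (Fin d → ℝ) × Finset (Fin d → ℝ)) :=
  (((pmCube d).powersetCard n) ×ˢ ((pmCube d).powersetCard 2)).filter (fun p => p.2 ⊆ p.1)

/-- The event that the chosen pair `{v,w}` is an edge of `conv X`. -/
def EdgeEvent {d : ℕ} (p : Finset (Fin d → ℝ) × Finset (Fin d → ℝ)) : Prop :=
  ∃ v w, p.2 = {v, w} ∧ IsEdge (convexHull ℝ (p.1 : Set (Fin d → ℝ))) v w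

/-- The event that the chosen pair `{v,w}` satisfies `dist(v,w) = k`. -/
def DistEvent {d : ℕ} (k : ℕ) (p : Finset (Fin d → ℝ) × Finset (Fin d → ℝ)) : Prop :=
  ∃ v w, v ≠ w ∧ p.2 = {v, w} ∧ hdist v w = k

/-- The event that the chosen pair `{v,w}` satisfies `dist(v,w) = k` and
`#(X ∩ C_*(v,w)) = m`. -/
def DistCapEvent {d : ℕ} (k m : ℕ) (p : Finset (Fin d → ℝ) × Finset (Fin d → ℝ)) : Prop :=
  ∃ v w, v ≠ w ∧ p.2 = {v, w} ∧ hdist v w = k ∧ (p.1 ∩ cubeFaceStar v w).card = m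

/-- The edge probability `π(d,n)`. -/
noncomputable def piEdge (d n : ℕ) : ℝ :=
  (((edgeSpace d n).filter (fun p => EdgeEvent p)).card : ℝ) / ((edgeSpace d n).card : ℝ)

/-- The conditional edge probability `π_k(d,n)` given `dist(v,w) = k`. -/
noncomputable def piEdgeK (d n k : ℕ) : ℝ :=
  (((edgeSpace d n).filter (fun p => EdgeEvent p ∧ DistEvent k p)).card : ℝ) /
    (((edgeSpace d n).filter (fun p => DistEvent k p)).card : ℝ)

/-- `φ : ℝ^{r+1} → ℝ^r`: the orthogonal projection onto the hyperplane
`H_𝟙 = {x : 𝟙ᵀx = 0}` (namely `x ↦ x - ((𝟙ᵀx)/(r+1))·𝟙`), followed by the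
projection to the first `r` coordinates. -/
noncomputable def phi (r : ℕ) (x : Fin (r + 1) → ℝ) : Fin r → ℝ :=
  fun i => x i.castSucc - (∑ j, x j) / (r + 1 : ℝ)

/-- The vector configuration `V_r = φ(C^{r+1}_*)`. -/
noncomputable def Vr (r : ℕ) : Finset (Fin r → ℝ) := (pmCubeStar (r + 1)).image (phi r)

/-- The half configuration `V_r^+ = φ({v ∈ C^{r+1}_* : v_{r+1} = +1})`. -/
noncomputable def VrPlus (r : ℕ) : Finset (Fin r → ℝ) :=
  (((pmCubeStar (r + 1)).filter (fun v => v (Fin.last r) = 1))).image (phi r)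

/-- The number of sign vectors `ε ∈ {-1,+1}^S` with `0 ∉ conv{ε_s · s : s ∈ S}`. -/
noncomputable def signCount {r : ℕ} (S : Finset (Fin r → ℝ)) : ℕ :=
  ((Finset.univ : Finset (↥S → Bool)).filter (fun ε =>
      (0 : Fin r → ℝ) ∉ convexHull ℝ
        (Set.range fun s : ↥S => (if ε s then (1 : ℝ) else -1) • (s : Fin r → ℝ)))).card

/-- `α(S)`: the probability that `0 ∉ conv{ε_s · s : s ∈ S}` for a uniformly random
sign vector `ε ∈ {-1,+1}^S`. -/
noncomputable def alphaSet {r : ℕ} (S : Finset (Fin r → ℝ)) : ℝ :=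
  (signCount S : ℝ) / ((Finset.univ : Finset (↥S → Bool)).card : ℝ)

/-- The complement `ℝ^r \ ⋃_{s ∈ S} H(s)` of the hyperplane arrangement `ℋ(S)`. -/
def arrComplement {r : ℕ} (S : Finset (Fin r → ℝ)) : Set (Fin r → ℝ) :=
  {x | ∀ s ∈ S, ∑ i, s i * x i ≠ 0}

/-- `χ(S)`: the number of chambers (connected components of the complement)
of the hyperplane arrangement `ℋ(S)`. -/
noncomputable def chi {r : ℕ} (S : Finset (Fin r → ℝ)) : ℕ :=
  Nat.card (ConnectedComponents ↥(arrComplement S))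

/-- `b(p,q) = ∑_{i=0}^p C(q,i)`. -/
def bFn (p q : ℕ) : ℕ := ∑ i ∈ Finset.range (p + 1), q.choose i

lemma mem_cube {d : ℕ} {x : Fin d → ℝ} : x ∈ cube01 d ↔ ∀ i, x i = 0 ∨ x i = 1 := by
  unfold cube01
  simp only [Finset.mem_image, Finset.mem_univ, true_and]
  constructor
  · rintro ⟨f, rfl⟩ i
    by_cases h : f i <;> simp [h]
  · intro h
    refine ⟨fun i => decide (x i = 1), ?_⟩
    funext i
    rcases h i with h | h <;> simp [h]

lemma card_cube (d : ℕ) : (cube01 d).card = 2 ^ d := by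
  unfold cube01
  rw [Finset.card_image_of_injective]
  · simp
  · intro f g h
    funext i
    have := congrFun h i
    by_cases h1 : f i <;> by_cases h2 : g i <;> simp_all

/-- the smallest face containing v, w -/
def fac {d : ℕ} (v w : Fin d → ℝ) : Finset (Fin d → ℝ) :=
  (cube01 d).filter (fun x => ∀ i, v i = w i → x i = v i)

lemma card_fac {d : ℕ} {v w : Fin d → ℝ} (hv : v ∈ cube01 d) (hw : w ∈ cube01 d) :
    2 ^ hdist v w ≤ (fac v w).card := by
  unfold hdist
  rw [← Finset.card_powerset]
  apply Finset.card_le_card_of_injOn (fun s i => if i ∈ s then w i else v i)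
  · intro s hs
    rw [mem_cube] at hv hw
    simp only [fac, Finset.coe_filter, Set.mem_ofPred_eq, mem_cube]
    refine ⟨fun i => ?_, fun i hi => ?_⟩
    · split_ifs
      exacts [hw i, hv i]
    · simp [hi]
  · intro s hs t ht hst
    simp only [Finset.coe_powerset, Set.mem_preimage, Set.mem_powerset_iff] at hs ht
    ext i
    have := congrFun hst i
    simp only at this
    constructor
    · intro hi
      by_contra hc
      have := hs hi
      simp_all
    · intro hi
      by_contra hc
      have := ht hi
      simp_all

/-- closed half-space traces on the cube -/
def halfs (d : ℕ) : Finset (Finset (Fin d → ℝ)) :=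
  (cube01 d).powerset.filter (fun T => ∃ (l : (Fin d → ℝ) →ₗ[ℝ] ℝ) (b : ℝ),
    ∀ x ∈ cube01 d, (x ∈ T ↔ b ≤ l x))

lemma seg_cube {d : ℕ} {v w x : Fin d → ℝ} (hv : v ∈ cube01 d) (hw : w ∈ cube01 d)
    (hx : x ∈ cube01 d) (hne : v ≠ w) (h : x ∈ segment ℝ v w) : x = v ∨ x = w := by
  obtain ⟨a, b, ha, hb, hab, rfl⟩ := h
  obtain ⟨i, hi⟩ := Function.ne_iff.mp hne
  rw [mem_cube] at hv hw hx
  have hxi := hx i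
  simp only [Pi.add_apply, Pi.smul_apply, smul_eq_mul] at hxi
  have key : a = 0 ∨ b = 0 := by
    rcases hv i with h1 | h1 <;> rcases hw i with h2 | h2 <;> rcases hxi with h3 | h3 <;>
      rw [h1, h2] at h3 <;> first | (exact absurd (h1.trans h2.symm) hi) | skip
    · right; linarith
    · left; linarith
    · left; linarith
    · right; linarith
  rcases key with h0 | h0
  · right
    have : b = 1 := by linarith
    simp [h0, this]
  · left
    have : a = 1 := by linarith
    simp [h0, this]

lemma edge_half {d : ℕ} {v w : Fin d → ℝ} {X : Finset (Fin d → ℝ)} (hX : X ⊆ cube01 d)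
    (hv : v ∈ X) (hw : w ∈ X) (h : IsEdge (convexHull ℝ (X : Set (Fin d → ℝ))) v w) :
    ∃ T ∈ halfs d, Disjoint X ((fac v w ∩ T) \ {v, w}) ∧
      2 ^ hdist v w ≤ 2 * (((fac v w ∩ T) \ {v, w}).card + 2) := by
  obtain ⟨hne, hexp⟩ := h
  obtain ⟨l, hl⟩ := hexp ⟨v, left_mem_segment ℝ v w⟩
  have hvm : v ∈ {x ∈ convexHull ℝ (X : Set (Fin d → ℝ)) | ∀ y ∈ convexHull ℝ (X : Set (Fin d → ℝ)), l y ≤ l x} :=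
    hl ▸ left_mem_segment ℝ v w
  have hwm : w ∈ {x ∈ convexHull ℝ (X : Set (Fin d → ℝ)) | ∀ y ∈ convexHull ℝ (X : Set (Fin d → ℝ)), l y ≤ l x} :=
    hl ▸ right_mem_segment ℝ v w
  have hlvw : l v = l w := le_antisymm (hwm.2 v hvm.1) (hvm.2 w hwm.1)
  set T := (cube01 d).filter (fun x => l v ≤ l x) with hT
  refine ⟨T, ?_, ?_, ?_⟩
  · simp only [halfs, Finset.mem_filter, Finset.mem_powerset]
    refine ⟨Finset.filter_subset _ _, l.toLinearMap, l v, fun x hx => ?_⟩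
    simp [hT, hx]
  · rw [Finset.disjoint_left]
    intro x hx hx2
    simp only [Finset.mem_sdiff, Finset.mem_inter, hT, Finset.mem_filter, Finset.mem_insert,
      Finset.mem_singleton, not_or] at hx2
    obtain ⟨⟨_, hxc, hlx⟩, h1, h2⟩ := hx2
    have : x ∈ segment ℝ v w := by
      rw [hl]
      exact ⟨subset_convexHull ℝ _ hx, fun y hy => (hvm.2 y hy).trans hlx⟩
    rcases seg_cube (hX hv) (hX hw) hxc hne this with h | h
    exacts [h1 h, h2 h]
  · refine (card_fac (hX hv) (hX hw)).trans ?_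
    have h1 : (fac v w).card = (fac v w ∩ T).card + (fac v w \ T).card :=
      (Finset.card_inter_add_card_sdiff _ _).symm
    have h2 : (fac v w \ T).card ≤ (fac v w ∩ T).card := by
      apply Finset.card_le_card_of_injOn (fun x => v + w - x)
      · intro x hx
        simp only [Finset.coe_sdiff, Set.mem_sdiff, Finset.mem_coe, fac, hT, Finset.mem_filter,
          mem_cube, Finset.coe_inter, Set.mem_inter_iff] at hx ⊢
        obtain ⟨⟨hc, hf⟩, hnt⟩ := hx
        have hcv := mem_cube.1 (hX hv)
        have hcw := mem_cube.1 (hX hw)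
        have hcc : ∀ i, (v + w - x) i = 0 ∨ (v + w - x) i = 1 := by
          intro i
          simp only [Pi.sub_apply, Pi.add_apply]
          have h3 := hf i
          rcases hcv i with a | a <;> rcases hcw i with b | b <;> rcases hc i with c | c <;>
            simp_all
        refine ⟨⟨hcc, fun i hi => ?_⟩, hcc, ?_⟩
        · have := hf i hi
          simp only [Pi.sub_apply, Pi.add_apply]
          linarith
        · have : ¬ l v ≤ l x := fun h => hnt ⟨hc, h⟩
          simp only [map_sub, map_add]
          linarith
      · intro x _ y _ hxy
        simpa using hxy
    have h3 : (fac v w ∩ T).card ≤ ((fac v w ∩ T) \ {v, w}).card + 2 := by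
      have := Finset.le_card_sdiff {v, w} (fac v w ∩ T)
      have h4 := Finset.card_le_two (a := v) (b := w)
      omega
    omega
lemma shatter_card {d : ℕ} {s : Finset (Fin d → ℝ)} (hs : (halfs d).Shatters s) :
    s ⊆ cube01 d ∧ s.card ≤ d + 1 := by
  have hsub : s ⊆ cube01 d := by
    obtain ⟨t, ht, hst⟩ := hs.exists_superset
    simp only [halfs, Finset.mem_filter, Finset.mem_powerset] at ht
    exact hst.trans ht.1
  refine ⟨hsub, ?_⟩
  by_contra! hc
  obtain ⟨f, h1, h2, h3⟩ := Module.exists_nontrivial_relation_sum_zero_of_finrank_succ_lt_card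
    (R := ℝ) (t := s) (by simpa using hc)
  obtain ⟨x, hx, hfx⟩ := Finset.exists_pos_of_sum_zero_of_exists_nonzero f h2 h3
  obtain ⟨u, hu, hsu⟩ := hs (t := s.filter (fun x => ¬ 0 < f x)) (Finset.filter_subset _ _)
  simp only [halfs, Finset.mem_filter, Finset.mem_powerset] at hu
  obtain ⟨_, l, b, hlb⟩ := hu
  have hz : ∑ y ∈ s, f y * (l y - b) = 0 := by
    have : ∑ y ∈ s, f y * (l y - b) = l (∑ y ∈ s, f y • y) - (∑ y ∈ s, f y) * b := by
      simp only [map_sum, map_smul, smul_eq_mul, mul_sub, Finset.sum_sub_distrib, Finset.sum_mul]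
    rw [this, h1, h2]; simp
  have hneg : ∑ y ∈ s, f y * (l y - b) < 0 := by
    apply Finset.sum_neg' 
    · intro y hy
      by_cases hp : 0 < f y
      · have : y ∉ u := fun hyu => by
          have : y ∈ s.filter (fun x => ¬ 0 < f x) := hsu ▸ Finset.mem_inter.2 ⟨hy, hyu⟩
          exact (Finset.mem_filter.1 this).2 hp
        rw [hlb y (hsub hy)] at this
        nlinarith
      · have : y ∈ s ∩ u := by rw [hsu]; exact Finset.mem_filter.2 ⟨hy, hp⟩
        have := (hlb y (hsub hy)).1 (Finset.mem_inter.1 this).2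
        nlinarith
    · refine ⟨x, hx, ?_⟩
      have : x ∉ u := fun hyu => by
        have : x ∈ s.filter (fun x => ¬ 0 < f x) := hsu ▸ Finset.mem_inter.2 ⟨hx, hyu⟩
        exact (Finset.mem_filter.1 this).2 hfx
      rw [hlb x (hsub hx)] at this
      nlinarith
  linarith

lemma card_halfs (d : ℕ) : (halfs d).card ≤ (d + 2) * 2 ^ (d * (d + 1)) := by
  refine (Finset.card_le_card_shatterer _).trans ?_
  have h1 : (halfs d).shatterer ⊆ (Finset.range (d + 2)).biUnion
      (fun i => (cube01 d).powersetCard i) := by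
    intro s hs
    have := shatter_card (Finset.mem_shatterer.1 hs)
    simp only [Finset.mem_biUnion, Finset.mem_range, Finset.mem_powersetCard]
    exact ⟨s.card, by omega, this.1, rfl⟩
  refine (Finset.card_le_card h1).trans (Finset.card_biUnion_le.trans ?_)
  refine (Finset.sum_le_card_nsmul _ _ (2 ^ (d * (d + 1))) ?_).trans (by simp)
  intro i hi
  rw [Finset.card_powersetCard, card_cube, pow_mul]
  refine (Nat.choose_le_pow _ _).trans ?_
  exact Nat.pow_le_pow_right (by positivity) (by simp at hi; omega)

lemma desc_le {q m : ℕ} (h : q ≤ m) (r : ℕ) :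
    q.descFactorial r * m ^ r ≤ m.descFactorial r * q ^ r := by
  induction r with
  | zero => simp
  | succ r ih =>
    rw [Nat.descFactorial_succ, Nat.descFactorial_succ, pow_succ, pow_succ]
    have : (q - r) * m ≤ (m - r) * q := by
      rw [Nat.sub_mul, Nat.sub_mul, mul_comm m q]
      exact Nat.sub_le_sub_left (Nat.mul_le_mul_left _ h) _
    calc (q - r) * q.descFactorial r * (m ^ r * m)
        = (q.descFactorial r * m ^ r) * ((q - r) * m) := by ring
      _ ≤ (m.descFactorial r * q ^ r) * ((m - r) * q) := Nat.mul_le_mul ih this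
      _ = _ := by ring

lemma choose_exp {m b r : ℕ} (hb : b ≤ m) (hm : 0 < m) :
    ((m - b).choose r : ℝ) ≤ (m.choose r : ℝ) * Real.exp (-((b : ℝ) * r / m)) := by
  have h := desc_le (Nat.sub_le m b) r
  rw [Nat.descFactorial_eq_factorial_mul_choose, Nat.descFactorial_eq_factorial_mul_choose,
    mul_assoc, mul_assoc] at h
  have h := Nat.le_of_mul_le_mul_left h (Nat.factorial_pos r)
  have h : ((m - b).choose r : ℝ) * (m : ℝ) ^ r ≤ (m.choose r : ℝ) * ((m : ℝ) - b) ^ r := by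
    rw [← Nat.cast_sub hb]
    exact_mod_cast h
  have hm' : (0 : ℝ) < m := by exact_mod_cast hm
  have hb' : (b : ℝ) ≤ m := by exact_mod_cast hb
  have h2 : ((m : ℝ) - b) / m ≤ Real.exp (-((b : ℝ) / m)) := by
    have := Real.add_one_le_exp (-((b : ℝ) / m))
    have h3 : ((m : ℝ) - b) / m = -((b : ℝ) / m) + 1 := by field_simp; ring
    linarith
  have h4 : Real.exp (-((b : ℝ) * r / m)) = Real.exp (-((b : ℝ) / m)) ^ r := by
    rw [← Real.exp_nat_mul]; congr 1; ring
  rw [h4]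
  calc ((m - b).choose r : ℝ) ≤ (m.choose r : ℝ) * ((m : ℝ) - b) ^ r / (m : ℝ) ^ r := by
        rw [le_div_iff₀ (by positivity)]; exact h
    _ = (m.choose r : ℝ) * (((m : ℝ) - b) / m) ^ r := by rw [div_pow]; ring
    _ ≤ _ := by
      gcongr

lemma count_avoid {α : Type*} [DecidableEq α] (C e B : Finset α) (n : ℕ) (he : e ⊆ C)
    (hB : B ⊆ C) (heB : Disjoint e B) :
    ((C.powersetCard n).filter (fun X => e ⊆ X ∧ Disjoint X B)).card ≤
      (C.card - e.card - B.card).choose (n - e.card) := by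
  have hc : (C \ (e ∪ B)).card = C.card - e.card - B.card := by
    rw [Finset.card_sdiff_of_subset (Finset.union_subset he hB), Finset.card_union_of_disjoint heB]
    omega
  rw [← hc, ← Finset.card_powersetCard]
  apply Finset.card_le_card_of_injOn (fun X => X \ e)
  · intro X hX
    simp only [Finset.coe_filter, Set.mem_ofPred_eq, Finset.mem_powersetCard] at hX
    obtain ⟨⟨h1, h2⟩, h3, h4⟩ := hX
    simp only [Finset.mem_coe, Finset.mem_powersetCard]
    refine ⟨?_, by rw [Finset.card_sdiff_of_subset h3, h2]⟩
    intro x hx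
    rw [Finset.mem_sdiff] at hx
    simp only [Finset.mem_sdiff, Finset.mem_union, not_or]
    exact ⟨h1 hx.1, hx.2, Finset.disjoint_left.1 h4 hx.1⟩
  · intro X hX Y hY hXY
    simp only [Finset.coe_filter, Set.mem_ofPred_eq] at hX hY
    rw [← Finset.sdiff_union_of_subset hX.2.1, ← Finset.sdiff_union_of_subset hY.2.1]
    simp only at hXY
    rw [hXY]
lemma cheb (d : ℕ) : ∑ D ∈ (Finset.univ : Finset (Fin d)).powerset, ((d : ℝ) / 2 - D.card) ^ 2
    = (d : ℝ) * 2 ^ d / 4 := by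
  rw [Finset.sum_powerset_apply_card (fun k => ((d : ℝ) / 2 - k) ^ 2)]
  have h := congrArg (Polynomial.eval (1 / 2 : ℝ)) (bernsteinPolynomial.variance ℝ d)
  simp only [bernsteinPolynomial, nsmul_eq_mul, Polynomial.eval_finsetSum, Polynomial.eval_mul,
    Polynomial.eval_pow, Polynomial.eval_sub, Polynomial.eval_natCast, Polynomial.eval_X,
    Polynomial.eval_one] at h
  simp only [Finset.card_univ, Fintype.card_fin, nsmul_eq_mul]
  have h2 : ∑ k ∈ Finset.range (d + 1), (d.choose k : ℝ) * ((d : ℝ) / 2 - k) ^ 2 =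
      2 ^ d * ∑ x ∈ Finset.range (d + 1), ((d : ℝ) * (1 / 2) - x) ^ 2 *
        ((d.choose x : ℝ) * (1 / 2) ^ x * (1 - 1 / 2) ^ (d - x)) := by
    rw [Finset.mul_sum]
    apply Finset.sum_congr rfl
    intro k hk
    have hk : k ≤ d := by simp at hk; omega
    have : (1 / 2 : ℝ) ^ k * (1 - 1 / 2) ^ (d - k) = 1 / 2 ^ d := by
      rw [show (1 - 1 / 2 : ℝ) = 1 / 2 by norm_num, ← pow_add, Nat.add_sub_cancel' hk]
      simp
    rw [mul_assoc (d.choose k : ℝ), this]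
    field_simp
  rw [h2, h]
  ring

lemma small_sets (d : ℕ) (δ : ℝ) (hδ : 0 < δ) (hd : 0 < d) :
    (((Finset.univ : Finset (Fin d)).powerset.filter
      (fun D => (D.card : ℝ) < (1 / 2 - δ) * d)).card : ℝ) ≤ 2 ^ d / (4 * δ ^ 2 * d) := by
  have hd' : (0 : ℝ) < d := by exact_mod_cast hd
  have h := cheb d
  have h1 : (((Finset.univ : Finset (Fin d)).powerset.filter
      (fun D => (D.card : ℝ) < (1 / 2 - δ) * d)).card : ℝ) * (δ * d) ^ 2 ≤ d * 2 ^ d / 4 := by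
    rw [← h, ← nsmul_eq_mul]
    refine (Finset.card_nsmul_le_sum _ (fun D => ((d : ℝ) / 2 - D.card) ^ 2) _ ?_).trans
      (Finset.sum_le_sum_of_subset_of_nonneg (Finset.filter_subset _ _) ?_)
    · intro D hD
      have := (Finset.mem_filter.1 hD).2
      apply pow_le_pow_left₀ (by positivity)
      linarith
    · intros; positivity
  rw [le_div_iff₀ (by positivity)]
  have h3 : 0 ≤ d * (2 ^ d - (((Finset.univ : Finset (Fin d)).powerset.filter
      (fun D => (D.card : ℝ) < (1 / 2 - δ) * d)).card : ℝ) * (4 * δ ^ 2 * d)) := by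
    nlinarith
  have := nonneg_of_mul_nonneg_right h3 hd'
  linarith

/-- near pairs -/
def nearP (d : ℕ) (K : ℝ) (e : Finset (Fin d → ℝ)) : Prop :=
  ∃ v w, e = {v, w} ∧ (hdist v w : ℝ) < K

lemma near_count (d : ℕ) (K : ℝ) :
    (((cube01 d).powersetCard 2).filter (nearP d K)).card ≤
      2 ^ d * ((Finset.univ : Finset (Fin d)).powerset.filter (fun D => (D.card : ℝ) < K)).card := by
  rw [← card_cube, ← Finset.card_product]
  have : ((cube01 d).powersetCard 2).filter (nearP d K) ⊆ (cube01 d ×ˢ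
      ((Finset.univ : Finset (Fin d)).powerset.filter (fun D => (D.card : ℝ) < K))).image
      (fun p => {p.1, fun i => if i ∈ p.2 then 1 - p.1 i else p.1 i}) := by
    intro e he
    simp only [Finset.mem_filter, Finset.mem_powersetCard] at he
    obtain ⟨⟨hc, _⟩, v, w, rfl, hK⟩ := he
    have hv : v ∈ cube01 d := hc (by simp)
    have hw : w ∈ cube01 d := hc (by simp)
    simp only [Finset.mem_image, Finset.mem_product, Finset.mem_filter, Finset.mem_powerset]
    refine ⟨(v, Finset.univ.filter (fun i => v i ≠ w i)), ⟨hv, Finset.subset_univ _, hK⟩, ?_⟩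
    congr 2
    funext i
    rw [mem_cube] at hv hw
    rcases hv i with a | a <;> rcases hw i with b | b <;> simp [a, b]
  exact (Finset.card_le_card this).trans Finset.card_image_le

lemma edge_symm {d : ℕ} {P : Set (Fin d → ℝ)} {v w : Fin d → ℝ} (h : IsEdge P v w) :
    IsEdge P w v := ⟨h.1.symm, by rw [segment_symm]; exact h.2⟩

lemma pair_edge {d : ℕ} {P : Set (Fin d → ℝ)} {v w v' w' : Fin d → ℝ} (h : IsEdge P v' w')
    (he : ({v, w} : Finset (Fin d → ℝ)) = {v', w'}) : IsEdge P v w := by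
  have hv : v = v' ∨ v = w' := by
    have : v ∈ ({v', w'} : Finset (Fin d → ℝ)) := he ▸ (by simp)
    simpa using this
  have hw : w = v' ∨ w = w' := by
    have : w ∈ ({v', w'} : Finset (Fin d → ℝ)) := he ▸ (by simp)
    simpa using this
  have hv' : v' = v ∨ v' = w := by
    have : v' ∈ ({v, w} : Finset (Fin d → ℝ)) := he ▸ (by simp)
    simpa using this
  have hw' : w' = v ∨ w' = w := by
    have : w' ∈ ({v, w} : Finset (Fin d → ℝ)) := he ▸ (by simp)
    simpa using this
  have hne := h.1
  have hs := edge_symm h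
  rcases hv with rfl | rfl <;> rcases hw with rfl | rfl <;> simp_all

/-- the edge property of a pair -/
def edgeP {d : ℕ} (X e : Finset (Fin d → ℝ)) : Prop :=
  ∃ v w, e = {v, w} ∧ IsEdge (convexHull ℝ (X : Set (Fin d → ℝ))) v w

lemma far_count {d n : ℕ} (hd : 2 ≤ d) {e : Finset (Fin d → ℝ)} {K β : ℝ}
    (he : e ∈ (cube01 d).powersetCard 2) (hfar : ¬ nearP d K e)
    (hβ : ∀ k : ℕ, K ≤ k → 2 * (β + 2) ≤ 2 ^ k) :
    ((((cube01 d).powersetCard n).filter (fun X => e ⊆ X ∧ edgeP X e)).card : ℝ) ≤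
      ((d + 2) * 2 ^ (d * (d + 1))) * (((2 ^ d - 2).choose (n - 2) : ℝ) *
        Real.exp (-(β * (n - 2 : ℕ) / (2 ^ d - 2 : ℕ)))) := by
  obtain ⟨hec, he2⟩ := Finset.mem_powersetCard.1 he
  obtain ⟨v, w, hvw, rfl⟩ := Finset.card_eq_two.1 he2
  have hk := hβ (hdist v w) (by
    by_contra! hc
    exact hfar ⟨v, w, rfl, hc⟩)
  let Bf : Finset (Fin d → ℝ) → Finset (Fin d → ℝ) := fun T => (fac v w ∩ T) \ {v, w}
  let I := (halfs d).filter (fun T => 2 ^ hdist v w ≤ 2 * ((Bf T).card + 2))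
  have hsub : ((cube01 d).powersetCard n).filter (fun X => {v, w} ⊆ X ∧ edgeP X {v, w}) ⊆
      I.biUnion (fun T => ((cube01 d).powersetCard n).filter
        (fun X => {v, w} ⊆ X ∧ Disjoint X (Bf T))) := by
    intro X hX
    simp only [Finset.mem_filter, Finset.mem_powersetCard] at hX
    obtain ⟨⟨hXc, hXn⟩, hvX, v', w', hee, hedge⟩ := hX
    have hedge := pair_edge hedge hee
    obtain ⟨T, hT, h1, h2⟩ := edge_half hXc (hvX (by simp)) (hvX (by simp)) hedge
    simp only [Finset.mem_biUnion, Finset.mem_filter, Finset.mem_powersetCard, I]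
    exact ⟨T, ⟨hT, h2⟩, ⟨hXc, hXn⟩, hvX, h1⟩
  have h4 : 4 ≤ 2 ^ d := by
    calc 4 = 2 ^ 2 := by norm_num
      _ ≤ 2 ^ d := Nat.pow_le_pow_right (by norm_num) hd
  have hm : 0 < 2 ^ d - 2 := by omega
  have hone : ∀ T ∈ I, ((((cube01 d).powersetCard n).filter
        (fun X => {v, w} ⊆ X ∧ Disjoint X (Bf T))).card : ℝ) ≤
      ((2 ^ d - 2).choose (n - 2) : ℝ) * Real.exp (-(β * (n - 2 : ℕ) / (2 ^ d - 2 : ℕ))) := by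
    intro T hT
    have hT2 : 2 ^ hdist v w ≤ 2 * ((Bf T).card + 2) := (Finset.mem_filter.1 hT).2
    have hBC : Bf T ⊆ cube01 d := by
      intro x hx
      simp only [Bf, fac, Finset.mem_sdiff, Finset.mem_inter, Finset.mem_filter] at hx
      exact hx.1.1.1
    have hdis : Disjoint {v, w} (Bf T) := Finset.disjoint_sdiff
    have h1 := count_avoid (cube01 d) {v, w} (Bf T) n hec hBC hdis
    rw [he2, card_cube] at h1
    have hle : (Bf T).card ≤ 2 ^ d - 2 := by
      have := Finset.card_le_card (Finset.union_subset hec hBC)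
      rw [Finset.card_union_of_disjoint hdis, he2, card_cube] at this
      omega
    have h2 := choose_exp (r := n - 2) hle hm
    have hb : β ≤ (Bf T).card := by
      have : (2 : ℝ) ^ hdist v w ≤ 2 * ((Bf T).card + 2) := by exact_mod_cast hT2
      linarith
    calc _ ≤ ((2 ^ d - 2 - (Bf T).card).choose (n - 2) : ℝ) := by exact_mod_cast h1
      _ ≤ _ := h2
      _ ≤ _ := by gcongr
  have hM : (I.card : ℝ) ≤ (d + 2) * 2 ^ (d * (d + 1)) := by
    have := (Finset.card_le_card (Finset.filter_subset _ _ : I ⊆ halfs d)).trans (card_halfs d)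
    exact_mod_cast this
  calc _ ≤ ((∑ T ∈ I, (((cube01 d).powersetCard n).filter
        (fun X => {v, w} ⊆ X ∧ Disjoint X (Bf T))).card : ℕ) : ℝ) := by
        exact_mod_cast (Finset.card_le_card hsub).trans Finset.card_biUnion_le
    _ = ∑ T ∈ I, ((((cube01 d).powersetCard n).filter
        (fun X => {v, w} ⊆ X ∧ Disjoint X (Bf T))).card : ℝ) := by push_cast; rfl
    _ ≤ I.card • _ := Finset.sum_le_card_nsmul _ _ _ hone
    _ ≤ _ := by
      rw [nsmul_eq_mul]
      gcongr

lemma sum_edges (d n : ℕ) : ∑ X ∈ (cube01 d).powersetCard n, (edgeCount X : ℝ) =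
    ∑ e ∈ (cube01 d).powersetCard 2,
      ((((cube01 d).powersetCard n).filter (fun X => e ⊆ X ∧ edgeP X e)).card : ℝ) := by
  have h1 : ∀ X ∈ (cube01 d).powersetCard n, edgeCount X =
      (((cube01 d).powersetCard 2).filter (fun e => e ⊆ X ∧ edgeP X e)).card := by
    intro X hX
    have hX := (Finset.mem_powersetCard.1 hX).1
    unfold edgeCount
    congr 1
    ext e
    simp only [Finset.mem_filter, Finset.mem_powersetCard]
    constructor
    · rintro ⟨⟨a, b⟩, c⟩
      exact ⟨⟨a.trans hX, b⟩, a, c⟩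
    · rintro ⟨⟨a, b⟩, c, d⟩
      exact ⟨⟨c, b⟩, d⟩
  rw [← Nat.cast_sum, ← Nat.cast_sum, Finset.sum_congr rfl h1]
  congr 1
  exact Finset.sum_card_bipartiteAbove_eq_sum_card_bipartiteBelow
    (fun (X e : Finset (Fin d → ℝ)) => e ⊆ X ∧ edgeP X e)

lemma main_bound {d n : ℕ} (hd : 2 ≤ d) (hn : 2 ≤ n) (hnN : n ≤ 2 ^ d) {K β : ℝ}
    (hβ : ∀ k : ℕ, K ≤ k → 2 * (β + 2) ≤ 2 ^ k) :
    expDensity d n ≤ 4 * (((Finset.univ : Finset (Fin d)).powerset.filter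
        (fun D => (D.card : ℝ) < K)).card : ℝ) / 2 ^ d +
      ((d + 2) * 2 ^ (d * (d + 1))) *
        Real.exp (-(β * (n - 2 : ℕ) / (2 ^ d - 2 : ℕ))) := by
  set S := (((Finset.univ : Finset (Fin d)).powerset.filter
        (fun D => (D.card : ℝ) < K)).card : ℝ) with hS
  set M : ℝ := (d + 2) * 2 ^ (d * (d + 1)) with hM
  set η := Real.exp (-(β * (n - 2 : ℕ) / (2 ^ d - 2 : ℕ))) with hη
  set Q : ℝ := ((2 ^ d - 2).choose (n - 2) : ℝ) with hQ
  have hQ0 : 0 < Q := by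
    have : 0 < (2 ^ d - 2).choose (n - 2) := Nat.choose_pos (by omega)
    rw [hQ]; exact_mod_cast this
  have h4 : 4 ≤ 2 ^ d := by
    calc 4 = 2 ^ 2 := by norm_num
      _ ≤ 2 ^ d := Nat.pow_le_pow_right (by norm_num) hd
  have hden : expDensity d n = (∑ X ∈ (cube01 d).powersetCard n, (edgeCount X : ℝ)) /
      (((2 ^ d).choose 2 : ℝ) * Q) := by
    unfold expDensity graphDensity
    have : ∑ X ∈ (cube01 d).powersetCard n, (edgeCount X : ℝ) / (X.card.choose 2 : ℝ) =
        (∑ X ∈ (cube01 d).powersetCard n, (edgeCount X : ℝ)) / (n.choose 2 : ℝ) := by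
      rw [Finset.sum_div]
      apply Finset.sum_congr rfl
      intro X hX
      rw [(Finset.mem_powersetCard.1 hX).2]
    rw [this, div_div, Finset.card_powersetCard, card_cube, hQ, mul_comm (n.choose 2 : ℝ)]
    congr 1
    exact_mod_cast Nat.choose_mul (n := 2 ^ d) hn
  have hN2 : (2 : ℝ) ^ d * 2 ^ d / 4 ≤ ((2 ^ d).choose 2 : ℝ) := by
    rw [Nat.cast_choose_two]
    have : (4 : ℝ) ≤ 2 ^ d := by exact_mod_cast h4
    push_cast
    nlinarith
  have hN2pos : 0 < ((2 ^ d).choose 2 : ℝ) := lt_of_lt_of_le (by positivity) hN2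
  rw [hden, sum_edges, ← Finset.sum_filter_add_sum_filter_not _ (nearP d K)]
  have hnear : ∑ e ∈ ((cube01 d).powersetCard 2).filter (nearP d K),
      ((((cube01 d).powersetCard n).filter (fun X => e ⊆ X ∧ edgeP X e)).card : ℝ) ≤
      2 ^ d * S * Q := by
    refine (Finset.sum_le_card_nsmul _ _ Q ?_).trans ?_
    · intro e he
      obtain ⟨hec, he2⟩ := Finset.mem_powersetCard.1 (Finset.mem_filter.1 he).1
      have h1 := count_avoid (cube01 d) e ∅ n hec (by simp) (by simp)
      rw [he2, card_cube] at h1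
      have h2 := Finset.card_le_card (Finset.monotone_filter_right ((cube01 d).powersetCard n)
        (p := fun X => e ⊆ X ∧ edgeP X e) (q := fun X => e ⊆ X ∧ Disjoint X ∅)
        (fun X _ hX => ⟨hX.1, by simp⟩))
      have h3 := h2.trans h1
      simp only [Finset.card_empty, Nat.sub_zero] at h3
      rw [hQ]; exact_mod_cast h3
    · rw [nsmul_eq_mul]
      have := near_count d K
      have : ((((cube01 d).powersetCard 2).filter (nearP d K)).card : ℝ) ≤ 2 ^ d * S := by
        rw [hS]; exact_mod_cast this
      gcongr
  have hfar : ∑ e ∈ ((cube01 d).powersetCard 2).filter (fun e => ¬ nearP d K e),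
      ((((cube01 d).powersetCard n).filter (fun X => e ⊆ X ∧ edgeP X e)).card : ℝ) ≤
      ((2 ^ d).choose 2 : ℝ) * (M * (Q * η)) := by
    refine (Finset.sum_le_card_nsmul _ _ (M * (Q * η)) ?_).trans ?_
    · intro e he
      rw [Finset.mem_filter] at he
      exact far_count hd he.1 he.2 hβ
    · rw [nsmul_eq_mul]
      have := Finset.card_le_card (Finset.filter_subset (fun e => ¬ nearP d K e)
        ((cube01 d).powersetCard 2))
      rw [Finset.card_powersetCard, card_cube] at this
      have : ((((cube01 d).powersetCard 2).filter (fun e => ¬ nearP d K e)).card : ℝ) ≤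
        ((2 ^ d).choose 2 : ℝ) := by exact_mod_cast this
      gcongr
  rw [div_le_iff₀ (by positivity)]
  refine (add_le_add hnear hfar).trans ?_
  rw [add_mul]
  apply add_le_add
  · have hS0 : 0 ≤ S := by positivity
    calc 2 ^ d * S * Q = 4 * S / 2 ^ d * ((2 ^ d * 2 ^ d / 4) * Q) := by field_simp
      _ ≤ _ := by gcongr
  · apply le_of_eq; ring
lemma expDensity_nonneg (d n : ℕ) : 0 ≤ expDensity d n := by
  unfold expDensity graphDensity
  positivity

lemma expDensity_big {d n : ℕ} (h : 2 ^ d < n) : expDensity d n = 0 := by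
  unfold expDensity
  rw [Finset.powersetCard_eq_empty.2 (by rwa [card_cube])]
  simp

lemma exists_s {ε : ℝ} (hε : 0 < ε) : ∃ s : ℝ, 0 < s ∧ s < 1 / 2 ∧
    2 < (2 : ℝ) ^ s * (Real.sqrt 2 + ε) := by
  have hc : ContinuousAt (fun s : ℝ => (2 : ℝ) ^ s * (Real.sqrt 2 + ε)) (1 / 2) := by
    have : ContinuousAt (fun s : ℝ => (2 : ℝ) ^ s) (1 / 2) :=
      Real.continuousAt_const_rpow (by norm_num)
    exact this.mul continuousAt_const
  have h2 : 2 < (2 : ℝ) ^ (1 / 2 : ℝ) * (Real.sqrt 2 + ε) := by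
    rw [← Real.sqrt_eq_rpow]
    have h1 : Real.sqrt 2 * Real.sqrt 2 = 2 := Real.mul_self_sqrt (by norm_num)
    have h3 : 0 < Real.sqrt 2 := by positivity
    nlinarith [mul_pos h3 hε]
  have h3 := (hc.eventually (lt_mem_nhds h2)).filter_mono
    (nhdsWithin_le_nhds (s := Set.Iio (1 / 2 : ℝ)))
  have h4 : ∀ᶠ s in nhdsWithin (1 / 2 : ℝ) (Set.Iio (1 / 2 : ℝ)), 0 < s :=
    (lt_mem_nhds (by norm_num : (0 : ℝ) < 1 / 2)).filter_mono nhdsWithin_le_nhds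
  obtain ⟨s, h5, h6, h7⟩ := (h3.and (h4.and self_mem_nhdsWithin)).exists
  exact ⟨s, h6, h7, h5⟩

lemma growth {ρ : ℝ} (hρ : 1 < ρ) :
    ∀ᶠ d : ℕ in atTop, ((d : ℝ) + 2) ^ 2 + d ≤ ρ ^ d / 8 := by
  have h := tendsto_pow_const_div_const_pow_of_one_lt 2 hρ
  have h1 : ∀ᶠ d : ℕ in atTop, (d : ℝ) ^ 2 / ρ ^ d < 1 / 80 :=
    h.eventually (gt_mem_nhds (by norm_num))
  filter_upwards [h1, eventually_ge_atTop 1] with d hd hd1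
  have hp : 0 < ρ ^ d := by positivity
  rw [div_lt_iff₀ hp] at hd
  have : (1 : ℝ) ≤ d := by exact_mod_cast hd1
  nlinarith

lemma prefactor (d : ℕ) : ((d : ℝ) + 2) * 2 ^ (d * (d + 1)) ≤ Real.exp (((d : ℝ) + 2) ^ 2) := by
  have h1 : (d : ℝ) + 2 ≤ Real.exp (d + 2) := by
    have := Real.add_one_le_exp ((d : ℝ) + 2)
    linarith
  have h2 : (2 : ℝ) ^ (d * (d + 1)) ≤ Real.exp ((d : ℝ) * (d + 1)) := by
    have h3 : (2 : ℝ) ≤ Real.exp 1 := by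
      have := Real.add_one_le_exp (1 : ℝ)
      linarith
    calc (2 : ℝ) ^ (d * (d + 1)) ≤ Real.exp 1 ^ (d * (d + 1)) := by gcongr
      _ = _ := by rw [← Real.exp_nat_mul]; push_cast; ring_nf
  calc ((d : ℝ) + 2) * 2 ^ (d * (d + 1)) ≤ Real.exp (d + 2) * Real.exp ((d : ℝ) * (d + 1)) := by
        gcongr
    _ = Real.exp ((d + 2) + (d : ℝ) * (d + 1)) := (Real.exp_add _ _).symm
    _ ≤ _ := by
      apply Real.exp_le_exp.2
      have : (0 : ℝ) ≤ d := by positivity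
      nlinarith

-- STATEMENT 1
theorem statement1 (n : ℕ → ℕ)
    (h : ∃ ε > (0 : ℝ), ∀ᶠ d in atTop, (Real.sqrt 2 + ε) ^ d ≤ (n d : ℝ)) :
    Tendsto (fun d => expDensity d (n d)) atTop (nhds 0) := by
  obtain ⟨ε, hε, hn⟩ := h
  obtain ⟨s, hs0, hs1, hs2⟩ := exists_s hε
  set γ := Real.sqrt 2 + ε with hγ
  set a : ℝ := (2 : ℝ) ^ s with ha
  have ha1 : 1 < a := Real.one_lt_rpow (by norm_num) hs0
  have hγ1 : 1 < γ := by
    have : 1 ≤ Real.sqrt 2 := Real.one_le_sqrt.2 (by norm_num)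
    linarith
  have hρ : 1 < a * γ / 2 := by linarith
  have hδ : 0 < 1 / 2 - s := by linarith
  have hlim : Tendsto (fun d : ℕ => 1 / (1 / 2 - s) ^ 2 / (d : ℝ) + Real.exp (-(d : ℝ)))
      atTop (nhds 0) := by
    have h1 : Tendsto (fun d : ℕ => 1 / (1 / 2 - s) ^ 2 / (d : ℝ)) atTop (nhds 0) :=
      tendsto_const_div_atTop_nhds_zero_nat _
    have h2 : Tendsto (fun d : ℕ => Real.exp (-(d : ℝ))) atTop (nhds 0) :=
      Real.tendsto_exp_neg_atTop_nhds_zero.comp tendsto_natCast_atTop_atTop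
    simpa using h1.add h2
  refine tendsto_of_tendsto_of_tendsto_of_le_of_le' tendsto_const_nhds hlim
    (Eventually.of_forall fun d => expDensity_nonneg d (n d)) ?_
  have hA := (tendsto_pow_atTop_atTop_of_one_lt ha1).eventually_ge_atTop 8
  have hG := (tendsto_pow_atTop_atTop_of_one_lt hγ1).eventually_ge_atTop 4
  filter_upwards [hn, hA, hG, growth hρ, eventually_ge_atTop 2] with d hnd hAd hGd hgr hd
  have hd0 : (0 : ℝ) < d := by exact_mod_cast (by omega : 0 < d)
  by_cases hbig : 2 ^ d < n d
  · rw [expDensity_big hbig]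
    positivity
  push Not at hbig
  have hn4 : 4 ≤ n d := by exact_mod_cast hGd.trans hnd
  have hkey : (2 : ℝ) ^ (s * d) = a ^ d := by
    rw [Real.rpow_mul (by norm_num), Real.rpow_natCast]
  have hβ : ∀ k : ℕ, (1 / 2 - (1 / 2 - s)) * d ≤ k → 2 * ((a ^ d / 2 - 2) + 2) ≤ (2 : ℝ) ^ k := by
    intro k hk
    have : (2 : ℝ) ^ (s * d) ≤ (2 : ℝ) ^ (k : ℝ) :=
      Real.rpow_le_rpow_of_exponent_le (by norm_num) (by linarith)
    rw [hkey, Real.rpow_natCast] at this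
    linarith
  refine (main_bound hd (by omega) hbig hβ).trans ?_
  apply add_le_add
  · have := small_sets d (1 / 2 - s) hδ (by omega)
    calc _ ≤ 4 * (2 ^ d / (4 * (1 / 2 - s) ^ 2 * d)) / 2 ^ d := by gcongr
      _ = _ := by field_simp
  · have h4 : 4 ≤ 2 ^ d := by
      calc 4 = 2 ^ 2 := by norm_num
        _ ≤ 2 ^ d := Nat.pow_le_pow_right (by norm_num) hd
    have hexp : (a * γ / 2) ^ d / 8 ≤
        (a ^ d / 2 - 2) * (n d - 2 : ℕ) / (2 ^ d - 2 : ℕ) := by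
      have hpos : (0 : ℝ) < (2 ^ d - 2 : ℕ) := by exact_mod_cast (by omega : 0 < 2 ^ d - 2)
      have hle : ((2 ^ d - 2 : ℕ) : ℝ) ≤ 2 ^ d := by
        exact_mod_cast Nat.sub_le (2 ^ d) 2
      have hr : γ ^ d / 2 ≤ ((n d - 2 : ℕ) : ℝ) := by
        rw [Nat.cast_sub (by omega)]
        have : (4 : ℝ) ≤ n d := by exact_mod_cast hn4
        push_cast
        linarith
      calc (a * γ / 2) ^ d / 8 = (a ^ d / 4) * (γ ^ d / 2) / 2 ^ d := by
            rw [div_pow, mul_pow]; ring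
        _ ≤ (a ^ d / 4) * (γ ^ d / 2) / (2 ^ d - 2 : ℕ) := by gcongr
        _ ≤ _ := by
          gcongr <;> linarith
    calc _ ≤ Real.exp (((d : ℝ) + 2) ^ 2) *
          Real.exp (-((a ^ d / 2 - 2) * (n d - 2 : ℕ) / (2 ^ d - 2 : ℕ))) := by
          gcongr
          exact prefactor d
      _ = Real.exp (((d : ℝ) + 2) ^ 2 +
          -((a ^ d / 2 - 2) * (n d - 2 : ℕ) / (2 ^ d - 2 : ℕ))) := by rw [Real.exp_add]
      _ ≤ _ := by
          apply Real.exp_le_exp.2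
          linarith

end
end

section
/- For every δ > 0 there exist infinitely many 0/1-polytopes P (i.e., for infinitely many dimensions d there is a d-dimensional polytope P = conv(X) with X ⊆ {0,1}^d) such that both the density of the graph of P is at least 1 − δ and the d-dimensional volume of P is at least 1 − δ. -/
open Finset Filter MeasureTheory

open scoped Classical

noncomputable section

/-- A Boolean vector as a 0/1-point. -/
def ptB {d : ℕ} (y : Fin d → Bool) : Fin d → ℝ := fun i => if y i then 1 else 0

/-- Product Bernoulli weight with mean `z`. -/
def wtB {d : ℕ} (z : Fin d → ℝ) (y : Fin d → Bool) : ℝ := ∏ l, if y l then z l else 1 - z l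

lemma sum_prod_bool {d : ℕ} (φ : Fin d → Bool → ℝ) :
    ∑ y : Fin d → Bool, ∏ l, φ l (y l) = ∏ l, (φ l true + φ l false) := by
  have := Finset.prod_univ_sum (fun _ : Fin d => (Finset.univ : Finset Bool)) φ
  simp only [Fintype.piFinset_univ, Fintype.sum_bool] at this
  exact this.symm

lemma sum_wtB {d : ℕ} (z : Fin d → ℝ) : ∑ y, wtB z y = 1 := by
  unfold wtB
  rw [sum_prod_bool (fun l b => if b then z l else 1 - z l)]
  simp

lemma sum_wtB_mul {d : ℕ} (z : Fin d → ℝ) (j : Fin d) :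
    ∑ y, wtB z y * ptB y j = z j := by
  have h : ∀ y : Fin d → Bool, wtB z y * ptB y j =
      ∏ l, ((if y l then z l else 1 - z l) * (if l = j then (if y l then 1 else 0) else 1)) := by
    intro y
    rw [Finset.prod_mul_distrib, Finset.prod_ite_eq' Finset.univ j]
    simp [wtB, ptB]
  rw [Finset.sum_congr rfl (fun y _ => h y)]
  rw [sum_prod_bool (fun l b => (if b then z l else 1 - z l) *
    (if l = j then (if b then 1 else 0) else 1))]
  rw [Finset.prod_eq_single j]
  · simp
  · intro b _ hb
    simp [hb]
  · simp

lemma sum_wtB_sq {d : ℕ} (z : Fin d → ℝ) :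
    ∑ y, wtB z y ^ 2 = ∏ l, (z l ^ 2 + (1 - z l) ^ 2) := by
  have h : ∀ y : Fin d → Bool, wtB z y ^ 2 =
      ∏ l, ((if y l then z l else 1 - z l) ^ 2) := by
    intro y
    rw [Finset.prod_pow]; rfl
  rw [Finset.sum_congr rfl (fun y _ => h y)]
  rw [sum_prod_bool (fun l b => (if b then z l else 1 - z l) ^ 2)]
  simp

lemma wtB_nonneg {d : ℕ} {z : Fin d → ℝ} (hz : ∀ i, 0 ≤ z i ∧ z i ≤ 1) (y : Fin d → Bool) :
    0 ≤ wtB z y := by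
  apply Finset.prod_nonneg
  intro i _
  split_ifs <;> linarith [(hz i).1, (hz i).2]

lemma sum_tuple {B : Type*} [Fintype B] {n : ℕ} (h : (Fin (n + 1) → B) → ℝ) :
    ∑ Y, h Y = ∑ b : B, ∑ Y : Fin n → B, h (Fin.cons b Y) := by
  rw [← (Fin.consEquiv (fun _ : Fin (n + 1) => B)).sum_comp, Fintype.sum_prod_type]
  rfl

lemma first_moment {B : Type*} [Fintype B] (f : B → ℝ) (hf : ∑ b, f b = 0) (n : ℕ) :
    ∑ Y : Fin n → B, ∑ k, f (Y k) = 0 := by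
  rw [Finset.sum_comm]
  apply Finset.sum_eq_zero
  intro k _
  cases n with
  | zero => exact k.elim0
  | succ n =>
    rw [← (Fin.insertNthEquiv (fun _ : Fin (n + 1) => B) k).sum_comp, Fintype.sum_prod_type]
    simp [Fin.insertNthEquiv, ← Finset.mul_sum, hf]

lemma second_moment {B : Type*} [Fintype B] (f : B → ℝ) (hf : ∑ b, f b = 0) (n : ℕ) :
    (Fintype.card B : ℝ) * ∑ Y : Fin n → B, (∑ k, f (Y k)) ^ 2 =
      n * (Fintype.card B : ℝ) ^ n * ∑ b, f b ^ 2 := by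
  induction n with
  | zero => simp
  | succ n ih =>
    rw [sum_tuple]
    simp only [Fin.sum_univ_succ, Fin.cons_zero, Fin.cons_succ, add_sq, Finset.sum_add_distrib]
    have h0 := first_moment f hf n
    have h1 : ∑ x : B, ∑ Y : Fin n → B, 2 * f x * ∑ k, f (Y k) = 0 := by
      simp only [← Finset.mul_sum, h0]; simp
    rw [h1]
    simp only [Finset.sum_const, Finset.card_univ, Fintype.card_pi, Finset.prod_const,
      Fintype.card_fin, nsmul_eq_mul, Nat.cast_pow, ← Finset.mul_sum]
    rw [mul_add, ih]
    push_cast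
    ring

/-- Marginal counting. -/
lemma marg_count {B : Type*} [Fintype B] {r N : ℕ} (e : Fin r ↪ Fin N)
    (S : Finset (Fin r → B)) :
    (Finset.univ.filter (fun Y : Fin N → B => (fun a => Y (e a)) ∈ S)).card *
      (Fintype.card B) ^ r = S.card * (Fintype.card B) ^ N := by
  let E : (Fin N → B) ≃ (Fin r → B) × ({k // k ∉ Set.range e} → B) :=
    (Equiv.arrowCongr ((Equiv.sumCongr (Equiv.ofInjective e e.injective)
      (Equiv.refl {k // k ∉ Set.range e})).trans (Equiv.Set.sumCompl (Set.range e))).symm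
      (Equiv.refl B)).trans (Equiv.sumArrowEquivProdArrow _ _ _)
  have hE : ∀ Y, (E Y).1 = fun a => Y (e a) := by
    intro Y
    funext a
    simp [E]
    rfl
  have h1 : (Finset.univ.filter (fun Y : Fin N → B => (fun a => Y (e a)) ∈ S)).card =
      (S ×ˢ (Finset.univ : Finset ({k // k ∉ Set.range e} → B))).card := by
    apply Finset.card_equiv E
    intro Y
    simp [← hE]
  rw [h1, Finset.card_product]
  have h2 : Fintype.card (Fin N → B) =
    Fintype.card ((Fin r → B) × ({k // k ∉ Set.range e} → B)) := Fintype.card_congr E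
  rw [Fintype.card_prod] at h2
  rw [Fintype.card_fun, Fintype.card_fun, Fintype.card_fin, Fintype.card_fin] at h2
  rw [h2, Finset.card_univ]
  ring

lemma col_count {d r N : ℕ} (e : Fin r ↪ Fin N) (S : Finset (Fin r → Bool)) :
    (Finset.univ.filter (fun Y : Fin N → Fin d → Bool => ∀ i, (fun a => Y (e a) i) ∈ S)).card *
      (2 ^ r) ^ d = S.card ^ d * (2 ^ d) ^ N := by
  have h := marg_count (B := Bool) e S
  simp only [Fintype.card_bool] at h
  obtain ⟨S', hS'⟩ : ∃ S' : Finset (Fin N → Bool),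
    S' = Finset.univ.filter (fun Y : Fin N → Bool => (fun a => Y (e a)) ∈ S) := ⟨_, rfl⟩
  have h : S'.card * 2 ^ r = S.card * 2 ^ N := by rw [hS']; convert h
  have h1 : (Finset.univ.filter (fun Y : Fin N → Fin d → Bool =>
      ∀ i, (fun a => Y (e a) i) ∈ S)).card = (Fintype.piFinset (fun _ : Fin d => S')).card := by
    apply Finset.card_equiv (Equiv.piComm _)
    intro Y
    simp [hS']
  rw [h1, Fintype.card_piFinset_const, ← mul_pow, h, mul_pow, ← pow_mul, ← pow_mul, mul_comm N d]

/-- Deterministic separation lemma. -/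
lemma sep_lemma {d N : ℕ} (hN : 0 < N) (Y : Fin N → Fin d → Bool) (x : Fin d → ℝ) (η : ℝ)
    (hη : 0 < η) (hx : ∀ i, η ≤ x i ∧ x i ≤ 1 - η)
    (hnot : x ∉ convexHull ℝ (Set.range fun k => ptB (Y k))) :
    ∃ (i : Fin d) (b : Bool), (η * (N / 2 ^ d)) ^ 2 ≤ d * ∑ j, (∑ k,
      (wtB (Function.update x i (if b then 1 else 0)) (Y k) * (ptB (Y k) j - x j) -
        (1 / 2 ^ d) * (Function.update x i (if b then 1 else 0) j - x j))) ^ 2 := by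
  have hcl : IsClosed (convexHull ℝ (Set.range fun k => ptB (Y k))) :=
    (Set.finite_range _).isClosed_convexHull ℝ
  obtain ⟨f, u, hf, hu⟩ := geometric_hahn_banach_closed_point (convex_convexHull ℝ _) hcl hnot
  set a : Fin d → ℝ := fun i => f (Pi.single i 1) with ha
  have hfa : ∀ y : Fin d → ℝ, f y = ∑ j, a j * y j := by
    intro y
    conv_lhs => rw [← Finset.univ_sum_single y]
    rw [map_sum]
    apply Finset.sum_congr rfl
    intro j _
    have : (Pi.single j (y j) : Fin d → ℝ) = y j • Pi.single j 1 := by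
      rw [← Pi.single_smul]; simp
    rw [this, map_smul]; simp [ha, mul_comm]
  have hlt : ∀ k, ∑ j, a j * (ptB (Y k) j - x j) < 0 := by
    intro k
    have := hf (ptB (Y k)) (subset_convexHull ℝ _ ⟨k, rfl⟩)
    simp only [mul_sub, Finset.sum_sub_distrib, ← hfa]
    linarith
  have hne : Nonempty (Fin d) := by
    by_contra h
    rw [not_nonempty_iff] at h
    have := hlt ⟨0, hN⟩
    simp at this
  obtain ⟨i, hi⟩ := Finite.exists_max (fun j => |a j|)
  have hM : 0 < |a i| := by
    by_contra h
    have h0 : ∀ j, a j = 0 := by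
      intro j
      have := hi j
      exact abs_eq_zero.1 (le_antisymm (this.trans (not_lt.1 h)) (abs_nonneg _))
    have := hlt ⟨0, hN⟩
    simp [h0] at this
  refine ⟨i, decide (0 ≤ a i), ?_⟩
  set b : Bool := decide (0 ≤ a i) with hb
  set z := Function.update x i (if b then 1 else 0) with hz
  have hz01 : ∀ j, 0 ≤ z j ∧ z j ≤ 1 := by
    intro j
    by_cases hj : j = i
    · subst hj
      simp only [hz, Function.update_self]
      split_ifs <;> norm_num
    · simp only [hz, Function.update_of_ne hj]
      constructor <;> linarith [(hx j).1, (hx j).2]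
  have hgain : |a i| * η ≤ ∑ j, a j * (z j - x j) := by
    rw [Finset.sum_eq_single i]
    · simp only [hz, Function.update_self, hb]
      by_cases h : 0 ≤ a i
      · simp only [h, decide_true, if_true, abs_of_nonneg h]
        apply mul_le_mul_of_nonneg_left _ h
        linarith [(hx i).2]
      · simp only [h, decide_false, abs_of_neg (not_le.1 h)]
        have := (hx i).1
        simp
        nlinarith [not_le.1 h]
    · intro j _ hj
      simp [hz, Function.update_of_ne hj]
    · simp
  set S : Fin d → ℝ := fun j => ∑ k, (wtB z (Y k) * (ptB (Y k) j - x j) -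
        (1 / 2 ^ d) * (z j - x j)) with hS
  have hD : ∑ j, a j * S j + (N / 2 ^ d) * ∑ j, a j * (z j - x j) ≤ 0 := by
    have e1 : ∑ j, a j * S j + (N / 2 ^ d) * ∑ j, a j * (z j - x j) =
        ∑ k, wtB z (Y k) * ∑ j, a j * (ptB (Y k) j - x j) := by
      simp only [hS, Finset.sum_sub_distrib, Finset.mul_sum, mul_sub]
      simp only [Finset.sum_const, Finset.card_univ, Fintype.card_fin, nsmul_eq_mul]
      rw [Finset.sum_comm (s := (Finset.univ : Finset (Fin N)))]
      rw [Finset.sum_comm (s := (Finset.univ : Finset (Fin N)))]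
      simp only [← Finset.sum_sub_distrib, ← Finset.sum_add_distrib]
      apply Finset.sum_congr rfl
      intro j _
      simp only [Finset.sum_sub_distrib, mul_left_comm (a j)]
      ring
    rw [e1]
    apply Finset.sum_nonpos
    intro k _
    exact mul_nonpos_of_nonneg_of_nonpos (wtB_nonneg hz01 _) (hlt k).le
  have hlow : -(|a i| * ∑ j, |S j|) ≤ ∑ j, a j * S j := by
    rw [Finset.mul_sum, ← Finset.sum_neg_distrib]
    apply Finset.sum_le_sum
    intro j _
    have h1 : |a j * S j| ≤ |a i| * |S j| := by
      rw [abs_mul]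
      exact mul_le_mul_of_nonneg_right (hi j) (abs_nonneg _)
    linarith [neg_abs_le (a j * S j)]
  have hN2 : (0 : ℝ) ≤ N / 2 ^ d := by positivity
  have h3 : η * (N / 2 ^ d) ≤ ∑ j, |S j| := by
    have h4 := mul_le_mul_of_nonneg_left hgain hN2
    have h5 : |a i| * (η * (N / 2 ^ d)) ≤ |a i| * ∑ j, |S j| := by nlinarith
    exact le_of_mul_le_mul_left h5 hM
  have h6 : (η * (N / 2 ^ d)) ^ 2 ≤ (∑ j, |S j|) ^ 2 := by
    apply pow_le_pow_left₀ _ h3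
    positivity
  have h7 := sq_sum_le_card_mul_sum_sq (s := (Finset.univ : Finset (Fin d))) (f := fun j => |S j|)
  simp only [sq_abs, Finset.card_univ, Fintype.card_fin] at h7
  exact h6.trans h7

/-- Polynomial upper bound for `sqrt (1 + u^2)`, `u = 2 x - 1`. -/
def gB (t : ℝ) : ℝ := 1 + (2 * t - 1) ^ 2 / 2 - (2 * t - 1) ^ 4 / 12

lemma gB_sq (t : ℝ) (h0 : 0 ≤ t) (h1 : t ≤ 1) : 2 * (t ^ 2 + (1 - t) ^ 2) ≤ gB t ^ 2 := by
  unfold gB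
  have hu : (2 * t - 1) ^ 2 ≤ 1 := by nlinarith
  have e : 2 * (t ^ 2 + (1 - t) ^ 2) = 1 + (2 * t - 1) ^ 2 := by ring
  rw [e]
  set v := (2 * t - 1) ^ 2 with hv
  have e2 : (2 * t - 1) ^ 4 = v ^ 2 := by rw [hv]; ring
  rw [e2]
  have hv0 : 0 ≤ v := sq_nonneg _
  nlinarith [mul_nonneg (sq_nonneg v) (sub_nonneg.2 hu), sq_nonneg (v ^ 2)]

lemma gB_nonneg (t : ℝ) (h0 : 0 ≤ t) (h1 : t ≤ 1) : 0 ≤ gB t := by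
  unfold gB
  have hu : (2 * t - 1) ^ 2 ≤ 1 := by nlinarith
  have e2 : (2 * t - 1) ^ 4 = ((2 * t - 1) ^ 2) ^ 2 := by ring
  rw [e2]
  nlinarith [sq_nonneg (2 * t - 1)]

lemma wt_sq_bound {d : ℕ} (x : Fin d → ℝ) (hx : ∀ i, 0 ≤ x i ∧ x i ≤ 1) (i : Fin d) (b : Bool) :
    2 ^ d * ∑ y, wtB (Function.update x i (if b then 1 else 0)) y ^ 2 ≤
      2 * (∏ l, gB (x l)) ^ 2 := by
  rw [sum_wtB_sq]
  have e : (2 : ℝ) ^ d = ∏ l : Fin d, 2 := by simp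
  rw [e, ← Finset.prod_mul_distrib, ← Finset.prod_pow]
  rw [← Finset.mul_prod_erase _ _ (Finset.mem_univ i), ← Finset.mul_prod_erase _ _ (Finset.mem_univ i)]
  have h1 : ∏ l ∈ Finset.univ.erase i, (2 * (Function.update x i (if b then 1 else 0) l ^ 2 +
      (1 - Function.update x i (if b then 1 else 0) l) ^ 2)) ≤
      ∏ l ∈ Finset.univ.erase i, gB (x l) ^ 2 := by
    apply Finset.prod_le_prod
    · intro l _; positivity
    · intro l hl
      rw [Function.update_of_ne (Finset.ne_of_mem_erase hl)]
      exact gB_sq _ (hx l).1 (hx l).2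
  have h2 : 1 ≤ gB (x i) ^ 2 := by
    refine le_trans ?_ (gB_sq _ (hx i).1 (hx i).2)
    nlinarith [sq_nonneg (2 * x i - 1)]
  have h3 : (2 : ℝ) * (Function.update x i (if b then 1 else 0) i ^ 2 +
      (1 - Function.update x i (if b then 1 else 0) i) ^ 2) = 2 := by
    rw [Function.update_self]; split_ifs <;> norm_num
  rw [h3]
  have h4 : 0 ≤ ∏ l ∈ Finset.univ.erase i, gB (x l) ^ 2 :=
    Finset.prod_nonneg (fun l _ => sq_nonneg _)
  nlinarith

lemma centered_sq {d : ℕ} (x z : Fin d → ℝ) (hx : ∀ i, 0 ≤ x i ∧ x i ≤ 1) (j : Fin d) :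
    ∑ y, (wtB z y * (ptB y j - x j) - (1 / 2 ^ d) * (z j - x j)) ^ 2 ≤ ∑ y, wtB z y ^ 2 := by
  have hm : ∑ y, wtB z y * (ptB y j - x j) = z j - x j := by
    simp only [mul_sub, Finset.sum_sub_distrib, ← Finset.sum_mul, sum_wtB_mul, sum_wtB, one_mul]
  have h1 : ∑ y, (wtB z y * (ptB y j - x j) - (1 / 2 ^ d) * (z j - x j)) ^ 2 =
      ∑ y, (wtB z y * (ptB y j - x j)) ^ 2 - (1 / 2 ^ d) * (z j - x j) ^ 2 := by
    simp only [sub_sq, Finset.sum_add_distrib, Finset.sum_sub_distrib]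
    rw [← Finset.sum_mul, ← Finset.mul_sum, hm]
    simp
    field_simp
    ring
  rw [h1]
  have h2 : ∑ y, (wtB z y * (ptB y j - x j)) ^ 2 ≤ ∑ y, wtB z y ^ 2 := by
    apply Finset.sum_le_sum
    intro y _
    rw [mul_pow]
    have h3 : (ptB y j - x j) ^ 2 ≤ 1 := by
      have := hx j
      unfold ptB
      split_ifs <;> nlinarith
    nlinarith [sq_nonneg (wtB z y)]
  have h4 : 0 ≤ (1 / 2 ^ d : ℝ) * (z j - x j) ^ 2 := by positivity
  linarith

lemma centered_sum {d : ℕ} (x z : Fin d → ℝ) (j : Fin d) :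
    ∑ y, (wtB z y * (ptB y j - x j) - (1 / 2 ^ d) * (z j - x j)) = 0 := by
  simp only [mul_sub, Finset.sum_sub_distrib, ← Finset.sum_mul, sum_wtB_mul, sum_wtB, one_mul]
  simp

/-- The tuples whose hull misses `x`. -/
def missB {d : ℕ} (N : ℕ) (x : Fin d → ℝ) : Finset (Fin N → Fin d → Bool) :=
  Finset.univ.filter (fun Y => x ∉ convexHull ℝ (Set.range fun k => ptB (Y k)))

lemma miss_bound {d N : ℕ} (hN : 0 < N) (x : Fin d → ℝ) (η : ℝ)
    (hη : 0 < η) (hx : ∀ i, η ≤ x i ∧ x i ≤ 1 - η) :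
    ((missB N x).card : ℝ) * (η ^ 2 * N) ≤ 4 * d ^ 3 * (2 ^ d) ^ N * (∏ l, gB (x l)) ^ 2 := by
  have hx01 : ∀ i, 0 ≤ x i ∧ x i ≤ 1 := fun i =>
    ⟨by linarith [(hx i).1], by linarith [(hx i).2]⟩
  set G := ∏ l, gB (x l)
  let zz : Fin d → Bool → Fin d → ℝ := fun i b => Function.update x i (if b then 1 else 0)
  let S : Fin d → Bool → Fin d → (Fin N → Fin d → Bool) → ℝ := fun i b j Y => ∑ k,
      (wtB (zz i b) (Y k) * (ptB (Y k) j - x j) - (1 / 2 ^ d) * (zz i b j - x j))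
  have hNr : (0 : ℝ) < N := by exact_mod_cast hN
  have hS : ∀ i b j, (2 ^ d * 2 ^ d) * ∑ Y, S i b j Y ^ 2 ≤ N * (2 ^ d) ^ N * (2 * G ^ 2) := by
    intro i b j
    have h := second_moment _ (centered_sum x (zz i b) j) N
    simp only [Fintype.card_fun, Fintype.card_bool, Fintype.card_fin, Nat.cast_pow,
      Nat.cast_ofNat] at h
    have h2 := centered_sq x (zz i b) hx01 j
    have h3 := wt_sq_bound x hx01 i b
    calc (2 ^ d * 2 ^ d) * ∑ Y, S i b j Y ^ 2 = 2 ^ d * (2 ^ d * ∑ Y, S i b j Y ^ 2) := by ring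
      _ = 2 ^ d * (N * (2 ^ d) ^ N * ∑ y, (wtB (zz i b) y * (ptB y j - x j) -
            (1 / 2 ^ d) * (zz i b j - x j)) ^ 2) := by rw [← h]
      _ ≤ 2 ^ d * (N * (2 ^ d) ^ N * ∑ y, wtB (zz i b) y ^ 2) := by gcongr
      _ = N * (2 ^ d) ^ N * (2 ^ d * ∑ y, wtB (zz i b) y ^ 2) := by ring
      _ ≤ _ := by gcongr
  have hc : ((missB N x).card : ℝ) * (η * (N / 2 ^ d)) ^ 2 ≤
      ∑ Y, ∑ i, ∑ b, d * ∑ j, S i b j Y ^ 2 := by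
    rw [← nsmul_eq_mul, ← Finset.sum_const]
    have h0 : ∀ Y i b, 0 ≤ d * ∑ j, S i b j Y ^ 2 := fun Y i b => by positivity
    refine le_trans (Finset.sum_le_sum (g := fun Y => ∑ i, ∑ b, d * ∑ j, S i b j Y ^ 2) ?_)
      (Finset.sum_le_sum_of_subset_of_nonneg (Finset.subset_univ _) ?_)
    · intro Y hY
      obtain ⟨i, b, h⟩ := sep_lemma hN Y x η hη hx (Finset.mem_filter.1 hY).2
      refine h.trans ?_
      refine le_trans ?_ (Finset.single_le_sum
        (f := fun i => ∑ b, d * ∑ j, S i b j Y ^ 2) (fun i _ => ?_) (Finset.mem_univ i))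
      · exact Finset.single_le_sum (f := fun b => d * ∑ j, S i b j Y ^ 2)
          (fun b _ => h0 Y i b) (Finset.mem_univ b)
      · exact Finset.sum_nonneg (fun b _ => h0 Y i b)
    · intro Y _ _
      exact Finset.sum_nonneg (fun i _ => Finset.sum_nonneg (fun b _ => h0 Y i b))
  have hsw : ∑ Y, ∑ i, ∑ b, d * ∑ j, S i b j Y ^ 2 =
      ∑ i, ∑ b, d * ∑ j, ∑ Y, S i b j Y ^ 2 := by
    rw [Finset.sum_comm]
    refine Finset.sum_congr rfl (fun i _ => ?_)
    rw [Finset.sum_comm]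
    refine Finset.sum_congr rfl (fun b _ => ?_)
    rw [← Finset.mul_sum, Finset.sum_comm]
  rw [hsw] at hc
  have h5 : (2 ^ d * 2 ^ d) * ∑ i, ∑ b, d * ∑ j, ∑ Y, S i b j Y ^ 2 ≤
      N * (4 * d ^ 3 * (2 ^ d) ^ N * G ^ 2) := by
    calc (2 ^ d * 2 ^ d) * ∑ i, ∑ b : Bool, d * ∑ j, ∑ Y, S i b j Y ^ 2
        = ∑ i, ∑ b : Bool, d * ∑ j, (2 ^ d * 2 ^ d) * ∑ Y, S i b j Y ^ 2 := by
          simp only [Finset.mul_sum]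
          refine Finset.sum_congr rfl (fun i _ => Finset.sum_congr rfl (fun b _ =>
            Finset.sum_congr rfl (fun j _ => Finset.sum_congr rfl (fun Y _ => by ring))))
      _ ≤ ∑ i : Fin d, ∑ b : Bool, (d : ℝ) * ∑ j : Fin d, (N : ℝ) * (2 ^ d) ^ N * (2 * G ^ 2) := by
          refine Finset.sum_le_sum (fun i _ => Finset.sum_le_sum (fun b _ =>
            mul_le_mul_of_nonneg_left (Finset.sum_le_sum (fun j _ => hS i b j))
              (Nat.cast_nonneg _)))
      _ = _ := by
          simp
          ring
  have h6 : N * (((missB N x).card : ℝ) * (η ^ 2 * N)) ≤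
      N * (4 * d ^ 3 * (2 ^ d) ^ N * G ^ 2) := by
    refine le_trans ?_ h5
    refine le_trans (le_of_eq ?_) (mul_le_mul_of_nonneg_left hc (by positivity))
    field_simp
  exact le_of_mul_le_mul_left h6 hNr

lemma miss_bound' {d N : ℕ} (hN : 0 < N) (x : Fin d → ℝ) (η : ℝ)
    (hη : 0 < η) (hx : ∀ i, η ≤ x i ∧ x i ≤ 1 - η) :
    ((missB N x).card : ℝ) ≤ (2 ^ d) ^ N * (Real.sqrt (4 * d ^ 3 / (η ^ 2 * N)) *
      ∏ l, gB (x l)) := by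
  have h := miss_bound hN x η hη hx
  have hNr : (0 : ℝ) < N := by exact_mod_cast hN
  have hG : 0 ≤ ∏ l, gB (x l) := Finset.prod_nonneg fun i _ =>
    gB_nonneg _ (by linarith [(hx i).1]) (by linarith [(hx i).2])
  have hle : ((missB N x).card : ℝ) ≤ (2 ^ d) ^ N := by
    have := Finset.card_le_univ (missB N x)
    simp only [Fintype.card_fun, Fintype.card_bool, Fintype.card_fin] at this
    exact_mod_cast this
  refine (pow_le_pow_iff_left₀ (Nat.cast_nonneg _) (by positivity) two_ne_zero).1 ?_
  rw [mul_pow, mul_pow, Real.sq_sqrt (by positivity)]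
  set F := ((missB N x).card : ℝ)
  have hF : 0 ≤ F := Nat.cast_nonneg _
  have h1 : F ≤ 4 * d ^ 3 * (2 ^ d) ^ N * (∏ l, gB (x l)) ^ 2 / (η ^ 2 * N) := by
    rw [le_div_iff₀ (by positivity)]; exact h
  calc F ^ 2 = F * F := sq F
    _ ≤ (2 ^ d) ^ N * (4 * d ^ 3 * (2 ^ d) ^ N * (∏ l, gB (x l)) ^ 2 / (η ^ 2 * N)) := by gcongr
    _ = _ := by ring

lemma integral_gB : ∫ t in Set.Icc (0 : ℝ) 1, gB t = 23 / 20 := by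
  rw [MeasureTheory.integral_Icc_eq_integral_Ioc, ← intervalIntegral.integral_of_le zero_le_one]
  have h : ∀ t ∈ Set.uIcc (0 : ℝ) 1, HasDerivAt
      (fun t : ℝ => t + (2 * t - 1) ^ 3 / 12 - (2 * t - 1) ^ 5 / 120) (gB t) t := by
    intro t _
    have h0 : HasDerivAt (fun t : ℝ => 2 * t - 1) 2 t := by
      simpa using ((hasDerivAt_id t).const_mul 2).sub_const 1
    have := ((hasDerivAt_id t).add ((h0.pow 3).div_const 12)).sub ((h0.pow 5).div_const 120)
    refine this.congr_deriv ?_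
    unfold gB
    simp
    ring
  rw [intervalIntegral.integral_eq_sub_of_hasDerivAt h]
  · norm_num
  · apply Continuous.intervalIntegrable
    unfold gB
    fun_prop

lemma integral_prod_gB (d : ℕ) :
    ∫ x in Set.Icc (0 : Fin d → ℝ) 1, ∏ l, gB (x l) = (23 / 20) ^ d := by
  rw [← Set.pi_univ_Icc, MeasureTheory.volume_pi, MeasureTheory.Measure.restrict_pi_pi,
    MeasureTheory.integral_fintype_prod_eq_prod (f := fun _ t => gB t)]
  simp only [Pi.zero_apply, Pi.one_apply, integral_gB, Finset.prod_const, Finset.card_univ, Fintype.card_fin]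

lemma vol_cube_box (d : ℕ) (η : ℝ) (hη : 0 < η) (hη2 : η ≤ 1 / 2) :
    volume.real (Set.Icc (0 : Fin d → ℝ) 1 \ Set.Icc (fun _ => η) (fun _ => 1 - η)) ≤
      2 * η * d := by
  rw [measureReal_sdiff (h₁ := (isCompact_Icc.measure_lt_top).ne)]
  · have h1 : volume.real (Set.Icc (0 : Fin d → ℝ) 1) = 1 := by
      rw [Measure.real, Real.volume_Icc_pi]; simp
    have h2 : volume.real (Set.Icc (fun _ : Fin d => η) (fun _ => 1 - η)) = (1 - η - η) ^ d := by
      rw [Measure.real, Real.volume_Icc_pi]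
      simp only [Finset.prod_const, Finset.card_univ, Fintype.card_fin, ENNReal.toReal_pow]
      rw [ENNReal.toReal_ofReal (by linarith)]
    rw [h1, h2]
    have := one_add_mul_le_pow (a := -(2 * η)) (by linarith) d
    have e : 1 - η - η = 1 + -(2 * η) := by ring
    rw [e]
    linarith
  · intro x hx
    refine ⟨fun i => ?_, fun i => ?_⟩
    · have := hx.1 i; simp at this ⊢; linarith
    · have := hx.2 i; simp at this ⊢; linarith
  · exact measurableSet_Icc

/-- Hull of a tuple. -/
def hullB {d N : ℕ} (Y : Fin N → Fin d → Bool) : Set (Fin d → ℝ) :=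
  convexHull ℝ (Set.range fun k => ptB (Y k))

lemma hullB_meas {d N : ℕ} (Y : Fin N → Fin d → Bool) : MeasurableSet (hullB Y) :=
  ((Set.finite_range _).isClosed_convexHull ℝ).measurableSet

lemma vol_avg {d N : ℕ} (hN : 0 < N) (η : ℝ) (hη : 0 < η) (hη2 : η ≤ 1 / 2) :
    ∑ Y : Fin N → Fin d → Bool, volume.real (Set.Icc (0 : Fin d → ℝ) 1 \ hullB Y) ≤
      (2 ^ d) ^ N * (2 * η * d + Real.sqrt (4 * d ^ 3 / (η ^ 2 * N)) * (23 / 20) ^ d) := by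
  set C := Set.Icc (0 : Fin d → ℝ) 1 with hC
  set box := Set.Icc (fun _ : Fin d => η) (fun _ => 1 - η) with hbox
  set A := Real.sqrt (4 * d ^ 3 / (η ^ 2 * N)) with hA
  have hfin : IsFiniteMeasure (volume.restrict C) :=
    ⟨by rw [Measure.restrict_apply_univ]; exact isCompact_Icc.measure_lt_top⟩
  have hint : ∀ s : Set (Fin d → ℝ), MeasurableSet s →
      Integrable (s.indicator (fun _ => (1 : ℝ))) (volume.restrict C) :=
    fun s hs => (integrable_const 1).indicator hs
  have hval : ∀ s : Set (Fin d → ℝ), MeasurableSet s →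
      volume.real (C \ s) = ∫ x in C, sᶜ.indicator (fun _ => (1 : ℝ)) x := by
    intro s hs
    rw [integral_indicator_const _ hs.compl, measureReal_restrict_apply hs.compl]
    simp [Set.sdiff_eq, Set.inter_comm]
  have hg : Integrable (fun x : Fin d → ℝ => ∏ l, gB (x l)) (volume.restrict C) := by
    apply ContinuousOn.integrableOn_compact isCompact_Icc
    unfold gB
    fun_prop
  simp only [hval _ (hullB_meas _)]
  rw [← integral_finsetSum _ (fun Y _ => hint _ (hullB_meas Y).compl)]
  have hrhs : (2 ^ d) ^ N * (2 * η * d + A * (23 / 20) ^ d) ≥ ∫ x in C,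
      (2 ^ d) ^ N * (boxᶜ.indicator (fun _ => (1 : ℝ)) x + A * ∏ l, gB (x l)) := by
    rw [integral_const_mul, integral_add (hint _ measurableSet_Icc.compl) (hg.const_mul _),
      integral_const_mul, integral_prod_gB, ← hval _ measurableSet_Icc]
    have := vol_cube_box d η hη hη2
    gcongr
  refine le_trans ?_ hrhs
  apply setIntegral_mono_on
  · exact integrable_finsetSum _ (fun Y _ => hint _ (hullB_meas Y).compl)
  · exact ((hint _ measurableSet_Icc.compl).add (hg.const_mul _)).const_mul _
  · exact measurableSet_Icc
  · intro x hx
    have e : ∑ Y : Fin N → Fin d → Bool, (hullB Y)ᶜ.indicator (fun _ => (1 : ℝ)) x =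
        ((missB N x).card : ℝ) := by
      simp only [Set.indicator_apply, Finset.sum_boole, missB, hullB, Set.mem_compl_iff]
    rw [e]
    have hG : 0 ≤ ∏ l, gB (x l) := Finset.prod_nonneg fun i _ => gB_nonneg _ (hx.1 i) (hx.2 i)
    have hA0 : 0 ≤ A := Real.sqrt_nonneg _
    by_cases hb : x ∈ box
    · have := miss_bound' hN x η hη (fun i => ⟨hb.1 i, hb.2 i⟩)
      have h1 : boxᶜ.indicator (fun _ => (1 : ℝ)) x = 0 := by simp [hb]
      rw [h1, zero_add]
      exact this
    · have hle : ((missB N x).card : ℝ) ≤ (2 ^ d) ^ N := by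
        have := Finset.card_le_univ (missB N x)
        simp only [Fintype.card_fun, Fintype.card_bool, Fintype.card_fin] at this
        exact_mod_cast this
      refine hle.trans ?_
      have h1 : boxᶜ.indicator (fun _ => (1 : ℝ)) x = 1 := by simp [hb]
      rw [h1]
      have : (0 : ℝ) ≤ (2 ^ d) ^ N := by positivity
      nlinarith [mul_nonneg this (mul_nonneg hA0 hG)]

lemma ptB_inj {d : ℕ} : Function.Injective (ptB (d := d)) := by
  intro y y' h
  funext i
  have := congrFun h i
  unfold ptB at this
  by_cases h1 : y i = true <;> by_cases h2 : y' i = true <;> simp_all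

lemma ptB_eq_iff {d : ℕ} (y y' : Fin d → Bool) (i : Fin d) : ptB y i = ptB y' i ↔ y i = y' i := by
  unfold ptB
  by_cases h1 : y i = true <;> by_cases h2 : y' i = true <;> simp_all

lemma isEdge_of {d : ℕ} (X : Finset (Fin d → ℝ)) (v w : Fin d → Bool) (hX : X ⊆ cube01 d)
    (hv : ptB v ∈ X) (hw : ptB w ∈ X) (hne : v ≠ w)
    (h : ∀ y, ptB y ∈ X → (∀ i, v i = w i → y i = v i) → y = v ∨ y = w) :
    IsEdge (convexHull ℝ (X : Set (Fin d → ℝ))) (ptB v) (ptB w) := by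
  refine ⟨fun h => hne (ptB_inj h), fun _ => ?_⟩
  let c : Fin d → ℝ := fun i => if v i = w i then (if v i then 1 else -1) else 0
  let l : StrongDual ℝ (Fin d → ℝ) := ∑ i, c i • ContinuousLinearMap.proj (R := ℝ) (φ := fun _ => ℝ) i
  have hl : ∀ y, l y = ∑ i, c i * y i := by
    intro y
    simp [l]
  have hterm : ∀ y : Fin d → Bool, ∀ i, c i * ptB y i ≤ c i * ptB v i := by
    intro y i
    simp only [c, ptB]
    split_ifs <;> norm_num
  have hlw : l (ptB w) = l (ptB v) := by
    rw [hl, hl]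
    apply Finset.sum_congr rfl
    intro i _
    simp only [c]
    split_ifs with h1
    · rw [(ptB_eq_iff v w i).2 h1]
    · rw [(ptB_eq_iff v w i).2 h1]
    · simp
  have hXp : ∀ p ∈ X, ∃ y, p = ptB y := by
    intro p hp
    have := hX hp
    unfold cube01 at this
    rw [Finset.mem_image] at this
    obtain ⟨y, _, hy⟩ := this
    exact ⟨y, hy.symm⟩
  have hle : ∀ p ∈ X, l p ≤ l (ptB v) := by
    intro p hp
    obtain ⟨y, rfl⟩ := hXp p hp
    rw [hl, hl]
    exact Finset.sum_le_sum (fun i _ => hterm y i)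
  have heq : ∀ p ∈ X, l p = l (ptB v) → p = ptB v ∨ p = ptB w := by
    intro p hp hpe
    obtain ⟨y, rfl⟩ := hXp p hp
    rw [hl, hl] at hpe
    have h2 := (Finset.sum_eq_sum_iff_of_le (fun i _ => hterm y i)).1 hpe
    have h3 := h y hp (fun i hi => by
      have h4 := h2 i (Finset.mem_univ i)
      simp only [c, hi, if_true] at h4
      rw [← ptB_eq_iff]
      split_ifs at h4 <;> linarith)
    rcases h3 with rfl | rfl
    · exact Or.inl rfl
    · exact Or.inr rfl
  have hle' : ∀ p ∈ convexHull ℝ (X : Set (Fin d → ℝ)), l p ≤ l (ptB v) := by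
    intro p hp
    have hsub : convexHull ℝ (X : Set (Fin d → ℝ)) ⊆ {p | l p ≤ l (ptB v)} :=
      convexHull_min (fun p hp => hle p hp)
        (convex_halfSpace_le l.toLinearMap.isLinear _)
    exact hsub hp
  refine ⟨l, ?_⟩
  apply Set.Subset.antisymm
  · intro x hx
    refine ⟨segment_subset_convexHull hv hw hx, ?_⟩
    obtain ⟨a, b, _, _, hab, rfl⟩ := hx
    intro y hy
    have : l (a • ptB v + b • ptB w) = l (ptB v) := by
      rw [map_add, map_smul, map_smul, hlw, smul_eq_mul, smul_eq_mul, ← add_mul, hab, one_mul]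
    rw [this]
    exact hle' y hy
  · rintro x ⟨hx, hmax⟩
    have h1 : l (ptB v) ≤ l x := hmax _ (subset_convexHull ℝ _ hv)
    rw [Finset.mem_convexHull'] at hx
    obtain ⟨ω, hω, hs, rfl⟩ := hx
    have h2 : ∑ p ∈ X, ω p * (l (ptB v) - l p) = 0 := by
      apply le_antisymm
      · simp only [mul_sub, Finset.sum_sub_distrib, ← Finset.sum_mul, hs, one_mul]
        rw [map_sum] at h1
        simp only [map_smul, smul_eq_mul] at h1
        linarith
      · exact Finset.sum_nonneg (fun p hp => mul_nonneg (hω p hp) (sub_nonneg.2 (hle p hp)))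
    rw [Finset.sum_eq_zero_iff_of_nonneg
      (fun p hp => mul_nonneg (hω p hp) (sub_nonneg.2 (hle p hp)))] at h2
    have h3 : ∀ p ∈ X, p ∉ ({ptB v, ptB w} : Finset (Fin d → ℝ)) → ω p = 0 := by
      intro p hp hpn
      rcases mul_eq_zero.1 (h2 p hp) with h4 | h4
      · exact h4
      · exfalso
        apply hpn
        have := heq p hp (by linarith)
        simpa using this
    have hsub : ({ptB v, ptB w} : Finset (Fin d → ℝ)) ⊆ X := by
      intro p hp
      simp only [Finset.mem_insert, Finset.mem_singleton] at hp
      rcases hp with rfl | rfl <;> assumption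
    have hvw : ptB v ≠ ptB w := fun h => hne (ptB_inj h)
    rw [← Finset.sum_subset hsub h3, Finset.sum_pair hvw] at hs
    rw [← Finset.sum_subset hsub (fun p hp hpn => by rw [h3 p hp hpn, zero_smul]),
      Finset.sum_pair hvw]
    exact ⟨_, _, hω _ hv, hω _ hw, hs, rfl⟩

/-- Triples of indices with `Y m` between `Y k` and `Y l`. -/
def tripB {d N : ℕ} (Y : Fin N → Fin d → Bool) : Finset (Fin N × Fin N × Fin N) :=
  Finset.univ.filter (fun t => (t.1 ≠ t.2.1 ∧ t.1 ≠ t.2.2 ∧ t.2.1 ≠ t.2.2) ∧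
    ∀ i, Y t.1 i = Y t.2.1 i → Y t.2.2 i = Y t.1 i)

/-- Collisions. -/
def collB {d N : ℕ} (Y : Fin N → Fin d → Bool) : Finset (Fin N × Fin N) :=
  Finset.univ.filter (fun t => t.1 ≠ t.2 ∧ ∀ i, Y t.1 i = Y t.2 i)

lemma sum_trip (d N : ℕ) : (∑ Y : Fin N → Fin d → Bool, ((tripB Y).card : ℝ)) ≤
    N ^ 3 * (3 / 4) ^ d * (2 ^ d) ^ N := by
  have h1 : (∑ Y : Fin N → Fin d → Bool, ((tripB Y).card : ℝ)) =
      ∑ t : Fin N × Fin N × Fin N, ((Finset.univ.filter (fun Y : Fin N → Fin d → Bool =>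
        (t.1 ≠ t.2.1 ∧ t.1 ≠ t.2.2 ∧ t.2.1 ≠ t.2.2) ∧
          ∀ i, Y t.1 i = Y t.2.1 i → Y t.2.2 i = Y t.1 i)).card : ℝ) := by
    simp only [tripB, ← Finset.sum_boole]
    rw [Finset.sum_comm]
  rw [h1]
  have h2 : ∀ t : Fin N × Fin N × Fin N, ((Finset.univ.filter (fun Y : Fin N → Fin d → Bool =>
        (t.1 ≠ t.2.1 ∧ t.1 ≠ t.2.2 ∧ t.2.1 ≠ t.2.2) ∧
          ∀ i, Y t.1 i = Y t.2.1 i → Y t.2.2 i = Y t.1 i)).card : ℝ) ≤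
          (3 / 4) ^ d * (2 ^ d) ^ N := by
    rintro ⟨k, l, m⟩
    by_cases hd : k ≠ l ∧ k ≠ m ∧ l ≠ m
    · let e : Fin 3 ↪ Fin N := ⟨![k, l, m], by
        obtain ⟨h1, h2, h3⟩ := hd
        intro a b hab
        fin_cases a <;> fin_cases b <;> simp_all⟩
      have hc := col_count (d := d) e (Finset.univ.filter
        (fun t : Fin 3 → Bool => t 0 = t 1 → t 2 = t 0))
      have h6 : (Finset.univ.filter
        (fun t : Fin 3 → Bool => t 0 = t 1 → t 2 = t 0)).card = 6 := by
        have : (@Finset.filter _ (fun t : Fin 3 → Bool => t 0 = t 1 → t 2 = t 0)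
          (fun t => inferInstance) Finset.univ).card = 6 := by decide
        convert this
      rw [h6] at hc
      simp only [Finset.mem_filter, Finset.mem_univ, true_and] at hc
      have hc' : ((Finset.univ.filter (fun Y : Fin N → Fin d → Bool =>
        (k ≠ l ∧ k ≠ m ∧ l ≠ m) ∧ ∀ i, Y k i = Y l i → Y m i = Y k i)).card : ℝ) *
          (2 ^ 3) ^ d = 6 ^ d * (2 ^ d) ^ N := by
        have e1 : (Finset.univ.filter (fun Y : Fin N → Fin d → Bool =>
          (k ≠ l ∧ k ≠ m ∧ l ≠ m) ∧ ∀ i, Y k i = Y l i → Y m i = Y k i)).card *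
          (2 ^ 3) ^ d = 6 ^ d * (2 ^ d) ^ N := by
          rw [← hc]
          congr 2
          ext Y
          simp only [Finset.mem_filter, Finset.mem_univ, true_and]
          exact and_iff_right hd
        exact_mod_cast e1
      have e2 : ((3 : ℝ) / 4) ^ d = 6 ^ d / (2 ^ 3) ^ d := by
        rw [← div_pow]; norm_num
      rw [e2, div_mul_eq_mul_div, ← hc']
      field_simp
      rfl
    · simp only [hd, false_and, Finset.filter_false, Finset.card_empty, Nat.cast_zero]
      positivity
  refine (Finset.sum_le_sum (fun t _ => h2 t)).trans (le_of_eq ?_)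
  simp
  ring

lemma sum_coll (d N : ℕ) : (∑ Y : Fin N → Fin d → Bool, ((collB Y).card : ℝ)) ≤
    N ^ 2 * (1 / 2) ^ d * (2 ^ d) ^ N := by
  have h1 : (∑ Y : Fin N → Fin d → Bool, ((collB Y).card : ℝ)) =
      ∑ t : Fin N × Fin N, ((Finset.univ.filter (fun Y : Fin N → Fin d → Bool =>
        t.1 ≠ t.2 ∧ ∀ i, Y t.1 i = Y t.2 i)).card : ℝ) := by
    simp only [collB, ← Finset.sum_boole]
    rw [Finset.sum_comm]
  rw [h1]
  have h2 : ∀ t : Fin N × Fin N, ((Finset.univ.filter (fun Y : Fin N → Fin d → Bool =>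
        t.1 ≠ t.2 ∧ ∀ i, Y t.1 i = Y t.2 i)).card : ℝ) ≤
          (1 / 2) ^ d * (2 ^ d) ^ N := by
    rintro ⟨k, l⟩
    by_cases hd : k ≠ l
    · let e : Fin 2 ↪ Fin N := ⟨![k, l], by
        intro a b hab
        fin_cases a <;> fin_cases b <;> simp_all⟩
      have hc := col_count (d := d) e (Finset.univ.filter
        (fun t : Fin 2 → Bool => t 0 = t 1))
      have h6 : (Finset.univ.filter (fun t : Fin 2 → Bool => t 0 = t 1)).card = 2 := by
        have : (@Finset.filter _ (fun t : Fin 2 → Bool => t 0 = t 1)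
          (fun t => inferInstance) Finset.univ).card = 2 := by decide
        convert this
      rw [h6] at hc
      simp only [Finset.mem_filter, Finset.mem_univ, true_and] at hc
      have hc' : ((Finset.univ.filter (fun Y : Fin N → Fin d → Bool =>
        k ≠ l ∧ ∀ i, Y k i = Y l i)).card : ℝ) *
          (2 ^ 2) ^ d = 2 ^ d * (2 ^ d) ^ N := by
        have e1 : (Finset.univ.filter (fun Y : Fin N → Fin d → Bool =>
          k ≠ l ∧ ∀ i, Y k i = Y l i)).card *
          (2 ^ 2) ^ d = 2 ^ d * (2 ^ d) ^ N := by
          rw [← hc]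
          congr 2
          ext Y
          simp only [Finset.mem_filter, Finset.mem_univ, true_and]
          exact and_iff_right hd
        exact_mod_cast e1
      have e2 : ((1 : ℝ) / 2) ^ d = 2 ^ d / (2 ^ 2) ^ d := by
        rw [← div_pow]; norm_num
      rw [e2, div_mul_eq_mul_div, ← hc']
      field_simp
      rfl
    · simp only [hd, false_and, Finset.filter_false, Finset.card_empty, Nat.cast_zero]
      positivity
  refine (Finset.sum_le_sum (fun t _ => h2 t)).trans (le_of_eq ?_)
  simp
  ring

lemma density_bound {d N : ℕ} (hN : 2 ≤ N) (Y : Fin N → Fin d → Bool)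
    (hY : Function.Injective Y) :
    1 - 4 * ((tripB Y).card : ℝ) / N ^ 2 ≤
      graphDensity (Finset.univ.image (fun k => ptB (Y k))) := by
  set X := Finset.univ.image (fun k => ptB (Y k)) with hX
  have hinj : Function.Injective (fun k => ptB (Y k)) := ptB_inj.comp hY
  have hcard : X.card = N := by
    rw [hX, Finset.card_image_of_injective _ hinj]; simp
  have hXc : X ⊆ cube01 d := by
    intro p hp
    rw [hX, Finset.mem_image] at hp
    obtain ⟨k, _, rfl⟩ := hp
    unfold cube01
    exact Finset.mem_image.2 ⟨Y k, Finset.mem_univ _, rfl⟩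
  have hmem : ∀ k, ptB (Y k) ∈ X := fun k => Finset.mem_image.2 ⟨k, Finset.mem_univ _, rfl⟩
  have hsum : edgeCount X + ((X.powersetCard 2).filter (fun e =>
      ¬ ∃ v w, e = {v, w} ∧ IsEdge (convexHull ℝ (X : Set (Fin d → ℝ))) v w)).card =
      N.choose 2 := by
    unfold edgeCount
    rw [Finset.card_filter_add_card_filter_not, Finset.card_powersetCard, hcard]
  have hbad : ((X.powersetCard 2).filter (fun e =>
      ¬ ∃ v w, e = {v, w} ∧ IsEdge (convexHull ℝ (X : Set (Fin d → ℝ))) v w)).card ≤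
      (tripB Y).card := by
    refine le_trans (Finset.card_le_card ?_) (Finset.card_image_le
      (f := fun t : Fin N × Fin N × Fin N => ({ptB (Y t.1), ptB (Y t.2.1)} :
        Finset (Fin d → ℝ))))
    intro e he
    rw [Finset.mem_filter, Finset.mem_powersetCard] at he
    obtain ⟨⟨heX, he2⟩, hnot⟩ := he
    obtain ⟨p, q, hpq, rfl⟩ := Finset.card_eq_two.1 he2
    have hp : p ∈ X := heX (by simp)
    have hq : q ∈ X := heX (by simp)
    rw [hX, Finset.mem_image] at hp hq
    obtain ⟨k, _, rfl⟩ := hp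
    obtain ⟨l, _, rfl⟩ := hq
    have hkl : k ≠ l := fun h => hpq (by rw [h])
    by_contra hcon
    apply hnot
    refine ⟨_, _, rfl, isEdge_of X (Y k) (Y l) hXc (hmem k) (hmem l)
      (fun h => hkl (hY h)) ?_⟩
    intro y hy hb
    rw [hX, Finset.mem_image] at hy
    obtain ⟨m, _, hm⟩ := hy
    have hm := ptB_inj hm
    subst hm
    by_contra hor
    push Not at hor
    apply hcon
    refine Finset.mem_image.2 ⟨(k, l, m), ?_, rfl⟩
    refine Finset.mem_filter.2 ⟨Finset.mem_univ _, ⟨hkl, ?_, ?_⟩, hb⟩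
    · intro h; exact hor.1 (congrArg Y h.symm)
    · intro h; exact hor.2 (congrArg Y h.symm)
  unfold graphDensity
  rw [hcard]
  have hch : ((N.choose 2 : ℕ) : ℝ) = N * (N - 1) / 2 := Nat.cast_choose_two ℝ N
  have hNr : (2 : ℝ) ≤ N := by exact_mod_cast hN
  have hpos : (0 : ℝ) < N.choose 2 := by rw [hch]; nlinarith
  rw [le_div_iff₀ hpos]
  have hge : (N : ℝ) ^ 2 / 4 ≤ N.choose 2 := by rw [hch]; nlinarith
  have h1 : (N.choose 2 : ℝ) - (tripB Y).card ≤ edgeCount X := by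
    have : N.choose 2 ≤ edgeCount X + (tripB Y).card := by omega
    have : (N.choose 2 : ℝ) ≤ edgeCount X + (tripB Y).card := by exact_mod_cast this
    linarith
  refine le_trans ?_ h1
  have h2 : ((tripB Y).card : ℝ) ≤ 4 * ((tripB Y).card : ℝ) / N ^ 2 * N.choose 2 := by
    calc ((tripB Y).card : ℝ) = 4 * ((tripB Y).card : ℝ) / N ^ 2 * (N ^ 2 / 4) := by
          field_simp
      _ ≤ _ := by gcongr
  linarith

lemma hullB_subset {d N : ℕ} (Y : Fin N → Fin d → Bool) :
    hullB Y ⊆ Set.Icc (0 : Fin d → ℝ) 1 := by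
  apply convexHull_min _ (convex_Icc _ _)
  rintro _ ⟨k, rfl⟩
  refine ⟨fun i => ?_, fun i => ?_⟩ <;> simp only [ptB, Pi.zero_apply, Pi.one_apply] <;>
    split_ifs <;> norm_num

/-- The conclusion in one dimension, from a numerical inequality. -/
lemma exists_good {d N : ℕ} (hN : 2 ≤ N) (ε η : ℝ) (hη : 0 < η) (hη2 : η ≤ 1 / 2)
    (hε1 : ε ≤ 1 / 2)
    (hnum : N ^ 2 * (1 / 2) ^ d + 4 * N * (3 / 4) ^ d + (2 * η * d +
      Real.sqrt (4 * d ^ 3 / (η ^ 2 * N)) * (23 / 20) ^ d) < ε) :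
    ∃ X : Finset (Fin d → ℝ), X ⊆ cube01 d ∧
        affineSpan ℝ (X : Set (Fin d → ℝ)) = ⊤ ∧
        1 - ε ≤ graphDensity X ∧
        ENNReal.ofReal (1 - ε) ≤ volume (convexHull ℝ (X : Set (Fin d → ℝ))) := by
  have hNr : (2 : ℝ) ≤ N := by exact_mod_cast hN
  set M : ℝ := (2 ^ d) ^ N with hM
  have hMpos : 0 < M := by positivity
  have h1 := sum_coll d N
  have h2 := sum_trip d N
  have h3 := vol_avg (d := d) (N := N) (by omega) η hη hη2
  have hex : ∃ Y : Fin N → Fin d → Bool, ((collB Y).card : ℝ) + 4 * ((tripB Y).card : ℝ) / N ^ 2 +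
      volume.real (Set.Icc (0 : Fin d → ℝ) 1 \ hullB Y) < ε := by
    have hs : ∑ Y : Fin N → Fin d → Bool, (((collB Y).card : ℝ) +
        4 * ((tripB Y).card : ℝ) / N ^ 2 +
        volume.real (Set.Icc (0 : Fin d → ℝ) 1 \ hullB Y)) <
        ∑ Y : Fin N → Fin d → Bool, ε := by
      rw [Finset.sum_add_distrib, Finset.sum_add_distrib, ← Finset.sum_div, ← Finset.mul_sum]
      have hr : ∑ Y : Fin N → Fin d → Bool, ε = M * ε := by
        simp [hM]
      rw [hr]
      have h4 : 4 * (∑ Y : Fin N → Fin d → Bool, ((tripB Y).card : ℝ)) / N ^ 2 ≤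
          M * (4 * N * (3 / 4) ^ d) := by
        rw [div_le_iff₀ (by positivity)]
        calc _ ≤ 4 * (N ^ 3 * (3 / 4) ^ d * M) := by gcongr
          _ = _ := by ring
      have h5 := mul_lt_mul_of_pos_left hnum hMpos
      nlinarith
    obtain ⟨Y, _, hY⟩ := Finset.exists_lt_of_sum_lt hs
    exact ⟨Y, hY⟩
  obtain ⟨Y, hY⟩ := hex
  have p1 : (0 : ℝ) ≤ (collB Y).card := Nat.cast_nonneg _
  have p2 : (0 : ℝ) ≤ 4 * ((tripB Y).card : ℝ) / N ^ 2 := by positivity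
  have p3 : 0 ≤ volume.real (Set.Icc (0 : Fin d → ℝ) 1 \ hullB Y) := measureReal_nonneg
  have hinj : Function.Injective Y := by
    have hc : ((collB Y).card : ℝ) < 1 := by linarith
    have hc : (collB Y).card = 0 := by
      have : (collB Y).card < 1 := by exact_mod_cast hc
      omega
    intro k l hkl
    by_contra hne
    have : (k, l) ∈ collB Y := by
      refine Finset.mem_filter.2 ⟨Finset.mem_univ _, hne, fun i => ?_⟩
      exact congrFun hkl i
    rw [Finset.card_eq_zero] at hc
    rw [hc] at this
    simp at this
  have hcoe : ((Finset.univ.image (fun k => ptB (Y k)) : Finset (Fin d → ℝ)) : Set (Fin d → ℝ)) =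
      Set.range (fun k => ptB (Y k)) := by simp
  have hvol : 1 - ε ≤ volume.real (hullB Y) := by
    have h6 : volume.real (Set.Icc (0 : Fin d → ℝ) 1) = 1 := by
      rw [Measure.real, Real.volume_Icc_pi]; simp
    have h7 := measureReal_sdiff (μ := volume) (hullB_subset Y) (hullB_meas Y)
      (h₁ := (isCompact_Icc.measure_lt_top).ne)
    rw [h6] at h7
    linarith
  have hvol' : ENNReal.ofReal (1 - ε) ≤ volume (hullB Y) := by
    rw [ENNReal.ofReal_le_iff_le_toReal]
    · exact hvol
    · exact ((measure_mono (hullB_subset Y)).trans_lt isCompact_Icc.measure_lt_top).ne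
  refine ⟨Finset.univ.image (fun k => ptB (Y k)), ?_, ?_, ?_, ?_⟩
  · intro p hp
    rw [Finset.mem_image] at hp
    obtain ⟨k, _, rfl⟩ := hp
    unfold cube01
    exact Finset.mem_image.2 ⟨Y k, Finset.mem_univ _, rfl⟩
  · rw [hcoe]
    by_contra hne
    have h8 := Measure.addHaar_affineSubspace (volume : Measure (Fin d → ℝ)) _ hne
    have h9 : volume (hullB Y) = 0 :=
      measure_mono_null (convexHull_subset_affineSpan _) h8
    rw [h9] at hvol'
    have : 0 < ENNReal.ofReal (1 - ε) := ENNReal.ofReal_pos.2 (by linarith)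
    exact absurd hvol' (not_le.2 this)
  · have := density_bound hN Y hinj
    linarith
  · rw [hcoe]
    exact hvol'

lemma numeric (ε : ℝ) (hε : 0 < ε) : ∀ᶠ k : ℕ in atTop,
    (((17 ^ k : ℕ) : ℝ)) ^ 2 * (1 / 2) ^ (10 * k) + 4 * ((17 ^ k : ℕ) : ℝ) * (3 / 4) ^ (10 * k) +
      (2 * (ε / (8 * ((10 * k : ℕ) : ℝ))) * ((10 * k : ℕ) : ℝ) +
      Real.sqrt (4 * ((10 * k : ℕ) : ℝ) ^ 3 / ((ε / (8 * ((10 * k : ℕ) : ℝ))) ^ 2 *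
        ((17 ^ k : ℕ) : ℝ))) * (23 / 20) ^ (10 * k)) < ε := by
  have t1 : Tendsto (fun k : ℕ => ((289 / 1024 : ℝ)) ^ k) atTop (nhds 0) :=
    tendsto_pow_atTop_nhds_zero_of_lt_one (by norm_num) (by norm_num)
  have t2 : Tendsto (fun k : ℕ => 4 * ((17 * (3 / 4) ^ 10 : ℝ)) ^ k) atTop (nhds (4 * 0)) :=
    (tendsto_pow_atTop_nhds_zero_of_lt_one (by norm_num) (by norm_num)).const_mul 4
  have t3 : Tendsto (fun k : ℕ => Real.sqrt (25600000 / ε ^ 2 *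
      ((k : ℝ) ^ 5 * ((23 / 20) ^ 20 / 17 : ℝ) ^ k))) atTop (nhds (Real.sqrt
        (25600000 / ε ^ 2 * 0))) :=
    ((tendsto_pow_const_mul_const_pow_of_abs_lt_one 5
      (by rw [abs_of_pos] <;> norm_num)).const_mul _).sqrt
  rw [mul_zero] at t2
  rw [mul_zero, Real.sqrt_zero] at t3
  have hε4 : (0 : ℝ) < ε / 4 := by linarith
  filter_upwards [t1.eventually (gt_mem_nhds hε4), t2.eventually (gt_mem_nhds hε4),
    t3.eventually (gt_mem_nhds hε4), eventually_gt_atTop 0] with k h1 h2 h3 hk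
  have hkr : (0 : ℝ) < k := by exact_mod_cast hk
  have e1 : (((17 ^ k : ℕ) : ℝ)) ^ 2 * (1 / 2) ^ (10 * k) = (289 / 1024 : ℝ) ^ k := by
    push_cast
    rw [← pow_mul, mul_comm k 2, pow_mul, pow_mul, ← mul_pow]
    norm_num
  have e2 : 4 * ((17 ^ k : ℕ) : ℝ) * (3 / 4) ^ (10 * k) = 4 * (17 * (3 / 4) ^ 10 : ℝ) ^ k := by
    push_cast
    rw [pow_mul, mul_assoc, ← mul_pow]
  have e3 : 2 * (ε / (8 * ((10 * k : ℕ) : ℝ))) * ((10 * k : ℕ) : ℝ) = ε / 4 := by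
    push_cast
    field_simp
    norm_num
  have e4 : Real.sqrt (4 * ((10 * k : ℕ) : ℝ) ^ 3 / ((ε / (8 * ((10 * k : ℕ) : ℝ))) ^ 2 *
        ((17 ^ k : ℕ) : ℝ))) * (23 / 20) ^ (10 * k) = Real.sqrt (25600000 / ε ^ 2 *
      ((k : ℝ) ^ 5 * ((23 / 20) ^ 20 / 17 : ℝ) ^ k)) := by
    have e5 : ((23 : ℝ) / 20) ^ (10 * k) = Real.sqrt (((23 / 20) ^ (10 * k)) ^ 2) :=
      (Real.sqrt_sq (by positivity)).symm
    rw [e5, ← Real.sqrt_mul (by positivity)]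
    congr 1
    have e6 : (((23 : ℝ) / 20) ^ (10 * k)) ^ 2 = ((23 / 20) ^ 20) ^ k := by
      rw [← pow_mul, ← pow_mul]; congr 1; ring
    rw [e6, div_pow ((23 / 20 : ℝ) ^ 20) 17]
    push_cast
    generalize ((23 / 20 : ℝ) ^ 20) ^ k = Q
    field_simp
    ring
  rw [e1, e2, e3, e4]
  linarith

-- STATEMENT 2
theorem statement2 (δ : ℝ) (hδ : 0 < δ) :
    {d : ℕ | ∃ X : Finset (Fin d → ℝ), X ⊆ cube01 d ∧
        affineSpan ℝ (X : Set (Fin d → ℝ)) = ⊤ ∧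
        1 - δ ≤ graphDensity X ∧
        ENNReal.ofReal (1 - δ) ≤ volume (convexHull ℝ (X : Set (Fin d → ℝ)))}.Infinite := by
  set ε := min δ (1 / 2) with hεd
  have hε : 0 < ε := lt_min hδ (by norm_num)
  have hεδ : ε ≤ δ := min_le_left _ _
  have hε2 : ε ≤ 1 / 2 := min_le_right _ _
  apply Set.infinite_of_forall_exists_gt
  intro n
  obtain ⟨k, hk, hkn⟩ := ((numeric ε hε).and (eventually_gt_atTop n)).exists
  have hk1 : 1 ≤ k := by omega
  have hkr : (1 : ℝ) ≤ k := by exact_mod_cast hk1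
  refine ⟨10 * k, ?_, by omega⟩
  have hN : 2 ≤ 17 ^ k := by
    calc 2 ≤ 17 ^ 1 := by norm_num
      _ ≤ 17 ^ k := Nat.pow_le_pow_right (by norm_num) hk1
  have hd : (0 : ℝ) < 8 * ((10 * k : ℕ) : ℝ) := by push_cast; linarith
  obtain ⟨X, hX, hA, hD, hV⟩ := exists_good hN ε (ε / (8 * ((10 * k : ℕ) : ℝ)))
    (div_pos hε hd) (by
      rw [div_le_iff₀ hd]
      push_cast
      linarith) hε2 hk
  exact ⟨X, hX, hA, by linarith, (ENNReal.ofReal_le_ofReal (by linarith)).trans hV⟩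

end
end

section
/- Let P ⊂ ℝ^d be a ±1-polytope (the convex hull of a subset of {−1,+1}^d) and let v, w be two distinct vertices of P. Then {v,w} is an edge (one-dimensional face) of P if and only if conv{v,w} ∩ conv(V(P) ∩ C_*(v,w)) = ∅, where V(P) is the vertex set of P. -/
open Finset Filter MeasureTheory

open scoped Classical

noncomputable section

lemma pm_coord {d : ℕ} {x : Fin d → ℝ} (hx : x ∈ pmCube d) (i : Fin d) :
    x i = 1 ∨ x i = -1 := by
  unfold pmCube at hx
  rw [Finset.mem_image] at hx
  obtain ⟨f, -, rfl⟩ := hx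
  by_cases h : f i <;> simp [h]

/-- A point of the line through `v, w` with coordinates in `[-1,1]` is on the segment. -/
lemma line_param {d : ℕ} {v w : Fin d → ℝ} (hv : v ∈ pmCube d) (hw : w ∈ pmCube d)
    {i : Fin d} (hi : v i ≠ w i) (t : ℝ)
    (h1 : v i + t * (w i - v i) ≤ 1) (h2 : -1 ≤ v i + t * (w i - v i)) : 0 ≤ t ∧ t ≤ 1 := by
  rcases pm_coord hv i with a | a <;> rcases pm_coord hw i with b | b <;>
    rw [a, b] at hi h1 h2 <;> first | exact absurd rfl hi | constructor <;> linarith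

/-- A cube point on the segment is an endpoint. -/
lemma pm_segment {d : ℕ} {v w y : Fin d → ℝ} (hv : v ∈ pmCube d) (hw : w ∈ pmCube d)
    (hy : y ∈ pmCube d) (hvw : v ≠ w) (hs : y ∈ segment ℝ v w) : y = v ∨ y = w := by
  obtain ⟨i, hi⟩ := Function.ne_iff.mp hvw
  obtain ⟨a, b, ha, hb, hab, rfl⟩ := hs
  have hyi := pm_coord hy i
  simp only [Pi.add_apply, Pi.smul_apply, smul_eq_mul] at hyi
  have key : a = 0 ∨ b = 0 := by
    rcases pm_coord hv i with p | p <;> rcases pm_coord hw i with q | q <;>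
      rw [p, q] at hi hyi <;> first
      | exact absurd rfl hi
      | (rcases hyi with h | h
         · first | (left; linarith) | (right; linarith)
         · first | (left; linarith) | (right; linarith))
  rcases key with h | h
  · right
    have : b = 1 := by linarith
    simp [h, this]
  · left
    have : a = 1 := by linarith
    simp [h, this]

lemma linear_max {d : ℕ} (l : (Fin d → ℝ) →L[ℝ] ℝ) {T : Set (Fin d → ℝ)} {x : Fin d → ℝ}
    (hx : x ∈ convexHull ℝ T) : ∃ y ∈ T, l x ≤ l y :=
  (l.toLinearMap.convexOn (convex_convexHull ℝ T)).exists_ge_of_mem_convexHull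
    (subset_convexHull ℝ T) hx

/-- Exposing functional on vertices gives exposed segment. -/
lemma exposed_of_functional {d : ℕ} (S : Finset (Fin d → ℝ)) (v w : Fin d → ℝ)
    (hv : v ∈ S) (hw : w ∈ S) (hvw : v ≠ w) (l : (Fin d → ℝ) →L[ℝ] ℝ) (hl : l v = l w)
    (hlt : ∀ x ∈ S, x ≠ v → x ≠ w → l x < l v) :
    IsExposed ℝ (convexHull ℝ (S : Set (Fin d → ℝ))) (segment ℝ v w) := by
  have hle : ∀ x ∈ S, l x ≤ l v := by
    intro x hx
    by_cases h1 : x = v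
    · rw [h1]
    by_cases h2 : x = w
    · rw [h2, hl]
    exact (hlt x hx h1 h2).le
  have hleC : ∀ x ∈ convexHull ℝ (S : Set (Fin d → ℝ)), l x ≤ l v := by
    intro x hx
    obtain ⟨y, hy, h⟩ := linear_max l hx
    exact h.trans (hle y hy)
  intro _
  refine ⟨l, Set.Subset.antisymm ?_ ?_⟩
  · intro x hx
    refine ⟨(convex_convexHull ℝ _).segment_subset (subset_convexHull ℝ _ hv)
      (subset_convexHull ℝ _ hw) hx, ?_⟩
    obtain ⟨a, b, ha, hb, hab, rfl⟩ := hx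
    intro y hy
    have : l (a • v + b • w) = l v := by
      rw [map_add, map_smul, map_smul, ← hl, ← add_smul, hab, one_smul]
    rw [this]
    exact hleC y hy
  · rintro x ⟨hx, hmax⟩
    have hxv : l v ≤ l x := hmax v (subset_convexHull ℝ _ hv)
    obtain ⟨c, hc0, hc1, hcx⟩ := Finset.mem_convexHull'.mp hx
    have hsum : ∑ y ∈ S, c y * (l v - l y) = l v - l x := by
      simp only [mul_sub, Finset.sum_sub_distrib]
      rw [← Finset.sum_mul, hc1, one_mul, ← hcx, map_sum]
      simp
    have hnn : ∀ y ∈ S, 0 ≤ c y * (l v - l y) := fun y hy =>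
      mul_nonneg (hc0 y hy) (sub_nonneg.mpr (hle y hy))
    have hz : ∑ y ∈ S, c y * (l v - l y) = 0 :=
      le_antisymm (by rw [hsum]; linarith) (Finset.sum_nonneg hnn)
    have hc : ∀ y ∈ S, y ∉ ({v, w} : Finset (Fin d → ℝ)) → c y = 0 := by
      intro y hy hn
      simp only [Finset.mem_insert, Finset.mem_singleton, not_or] at hn
      have h := (Finset.sum_eq_zero_iff_of_nonneg hnn).mp hz y hy
      rcases mul_eq_zero.mp h with h | h
      · exact h
      · linarith [hlt y hy hn.1 hn.2]
    have hsub : ({v, w} : Finset (Fin d → ℝ)) ⊆ S := by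
      intro y hy
      simp only [Finset.mem_insert, Finset.mem_singleton] at hy
      rcases hy with rfl | rfl <;> assumption
    rw [← Finset.sum_subset hsub hc, Finset.sum_pair hvw] at hc1
    rw [← Finset.sum_subset hsub (fun y hy hn => by rw [hc y hy hn, zero_smul]),
      Finset.sum_pair hvw] at hcx
    exact ⟨c v, c w, hc0 v hv, hc0 w hw, hc1, hcx⟩

/-- Separation of the line through `v, w` from `conv Y`. -/
lemma separate_line {d : ℕ} (Y : Finset (Fin d → ℝ)) (hY : Y ⊆ pmCube d) (v w : Fin d → ℝ)
    (hv : v ∈ pmCube d) (hw : w ∈ pmCube d) (hvw : v ≠ w)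
    (h : segment ℝ v w ∩ convexHull ℝ (Y : Set (Fin d → ℝ)) = ∅) :
    ∃ f : (Fin d → ℝ) →L[ℝ] ℝ, f v = f w ∧ ∀ y ∈ Y, f y < f v := by
  obtain ⟨i, hi⟩ := Function.ne_iff.mp hvw
  have hdisj : Disjoint (convexHull ℝ (Y : Set (Fin d → ℝ)))
      (line[ℝ, v, w] : Set (Fin d → ℝ)) := by
    rw [Set.disjoint_left]
    intro p hp hpl
    obtain ⟨t, rfl⟩ := mem_affineSpan_pair_iff_exists_lineMap_eq.mp hpl
    obtain ⟨y, hy, hy1⟩ := linear_max (ContinuousLinearMap.proj i) hp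
    obtain ⟨z, hz, hz1⟩ := linear_max (-(ContinuousLinearMap.proj i)) hp
    have hy2 := pm_coord (hY hy) i
    have hz2 := pm_coord (hY hz) i
    simp [AffineMap.lineMap_apply] at hy1 hz1
    have ht := line_param hv hw hi t
      (by rcases hy2 with h | h <;> linarith) (by rcases hz2 with h | h <;> linarith)
    have hm : AffineMap.lineMap v w t ∈ segment ℝ v w := by
      rw [segment_eq_image_lineMap]
      exact ⟨t, ht, rfl⟩
    have : AffineMap.lineMap v w t ∈
      segment ℝ v w ∩ convexHull ℝ (Y : Set (Fin d → ℝ)) := ⟨hm, hp⟩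
    rw [h] at this
    exact this
  obtain ⟨f, a, b, h1, hab, h2⟩ := geometric_hahn_banach_compact_closed
    (convex_convexHull ℝ (Y : Set (Fin d → ℝ))) (Y.finite_toSet.isCompact_convexHull ℝ)
    (line[ℝ, v, w]).convex (AffineSubspace.closed_of_finiteDimensional (𝕜 := ℝ) _) hdisj
  have hline : ∀ t : ℝ, b < f v + t * (f w - f v) := by
    intro t
    have := h2 _ (AffineMap.lineMap_mem_affineSpan_pair t v w)
    simp [AffineMap.lineMap_apply] at this
    linarith
  have heq : f v = f w := by
    by_contra hne
    have hne' : f w - f v ≠ 0 := fun h => hne (by linarith)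
    have := hline ((b - f v) / (f w - f v))
    rw [div_mul_cancel₀ _ hne'] at this
    linarith
  refine ⟨f, heq, fun y hy => ?_⟩
  have := h1 y (subset_convexHull ℝ _ hy)
  have := hline 0
  linarith

/-- Functional exposing the cube face `C(v,w)`. -/
lemma face_functional {d : ℕ} (v w : Fin d → ℝ) (hv : v ∈ pmCube d) :
    ∃ g : (Fin d → ℝ) →L[ℝ] ℝ, g v = g w ∧ (∀ x ∈ cubeFace v w, g x = g v) ∧
      ∀ x ∈ pmCube d, x ∉ cubeFace v w → g x + 1 ≤ g v := by
  let g : (Fin d → ℝ) →L[ℝ] ℝ :=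
    ∑ i ∈ Finset.univ.filter (fun i => v i = w i), v i • ContinuousLinearMap.proj i
  have hg : ∀ x, g x = ∑ i ∈ Finset.univ.filter (fun i => v i = w i), v i * x i := by
    intro x
    simp [g]
  refine ⟨g, ?_, ?_, ?_⟩
  · rw [hg, hg]
    refine Finset.sum_congr rfl fun i hi => ?_
    rw [(Finset.mem_filter.mp hi).2]
  · intro x hx
    rw [hg, hg]
    refine Finset.sum_congr rfl fun i hi => ?_
    rw [(Finset.mem_filter.mp hx).2 i (Finset.mem_filter.mp hi).2]
  · intro x hx hn
    have : ∃ j, v j = w j ∧ x j ≠ v j := by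
      by_contra hcon
      push Not at hcon
      exact hn (Finset.mem_filter.mpr ⟨hx, hcon⟩)
    obtain ⟨j, hj, hxj⟩ := this
    have hsub : g v - g x =
        ∑ i ∈ Finset.univ.filter (fun i => v i = w i), (v i * v i - v i * x i) := by
      rw [hg, hg, Finset.sum_sub_distrib]
    have h1 : v j * v j - v j * x j ≤
        ∑ i ∈ Finset.univ.filter (fun i => v i = w i), (v i * v i - v i * x i) := by
      refine Finset.single_le_sum (f := fun i => v i * v i - v i * x i) (fun i _ => ?_)
        (Finset.mem_filter.mpr ⟨Finset.mem_univ j, hj⟩)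
      rcases pm_coord hv i with a | a <;> rcases pm_coord hx i with b | b <;>
        simp only [a, b] <;> norm_num
    have h2 : 1 ≤ v j * v j - v j * x j := by
      rcases pm_coord hv j with a | a <;> rcases pm_coord hx j with b | b <;>
        rw [a, b] at hxj ⊢ <;> first | exact absurd rfl hxj | norm_num
    linarith

-- STATEMENT 3
theorem statement3 {d : ℕ} (S : Finset (Fin d → ℝ)) (hS : S ⊆ pmCube d)
    (v w : Fin d → ℝ) (hv : v ∈ S) (hw : w ∈ S) (hvw : v ≠ w) :
    IsEdge (convexHull ℝ (S : Set (Fin d → ℝ))) v w ↔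
      segment ℝ v w ∩
        convexHull ℝ ((S ∩ cubeFaceStar v w : Finset (Fin d → ℝ)) : Set (Fin d → ℝ)) = ∅ := by
  have hvc := hS hv
  have hwc := hS hw
  constructor
  · rintro ⟨-, hE⟩
    obtain ⟨l, hl⟩ := hE ⟨v, left_mem_segment ℝ v w⟩
    rw [Set.eq_empty_iff_forall_notMem]
    rintro p ⟨hp, hpY⟩
    obtain ⟨y, hy, hpy⟩ := linear_max l hpY
    rw [hl] at hp
    rw [Finset.mem_coe, Finset.mem_inter] at hy
    have hyseg : y ∈ segment ℝ v w := by
      rw [hl]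
      exact ⟨subset_convexHull ℝ _ hy.1, fun z hz => (hp.2 z hz).trans hpy⟩
    have hy2 := (Finset.mem_sdiff.mp hy.2).2
    simp only [Finset.mem_insert, Finset.mem_singleton] at hy2
    exact hy2 (pm_segment hvc hwc (hS hy.1) hvw hyseg)
  · intro h
    refine ⟨hvw, ?_⟩
    obtain ⟨f, hf, hfY⟩ := separate_line (S ∩ cubeFaceStar v w)
      (Finset.inter_subset_left.trans hS) v w hvc hwc hvw h
    obtain ⟨g, hg, hgF, hgN⟩ := face_functional v w hvc
    let M : ℝ := ∑ x ∈ S, |f x - f v| + 1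
    refine exposed_of_functional S v w hv hw hvw (f + M • g) (by simp [hf, hg]) ?_
    intro x hx hxv hxw
    simp only [add_apply, smul_apply, smul_eq_mul]
    by_cases hxF : x ∈ cubeFace v w
    · rw [hgF x hxF]
      have := hfY x (Finset.mem_inter.mpr ⟨hx, Finset.mem_sdiff.mpr ⟨hxF, by simp [hxv, hxw]⟩⟩)
      linarith
    · have h1 := hgN x (hS hx) hxF
      have h2 : |f x - f v| ≤ ∑ x ∈ S, |f x - f v| :=
        Finset.single_le_sum (f := fun x => |f x - f v|) (fun i _ => abs_nonneg _) hx
      have h3 : f x - f v < M := by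
        have := le_abs_self (f x - f v)
        simp only [M]
        linarith
      have hM : 0 ≤ M := by
        have := abs_nonneg (f x - f v)
        simp only [M]
        linarith
      nlinarith [mul_le_mul_of_nonneg_left h1 hM]

end
end

section
/- For all k and all m with 0 ≤ m ≤ 2^k − 2: τ(k,m) = [C(2^{k−1} − 1, m) · 2^m / C(2^k − 2, m)] · α(k,m), where C(a,b) denotes the binomial coefficient. -/
open Finset Filter MeasureTheory

open scoped Classical

noncomputable section

/-- Number of `m`-subsets without antipodal pairs of `H ∪ -H`. -/
theorem card_noAntipodal {k : ℕ} (S H : Finset (Fin k → ℝ))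
    (hS : ∀ x, x ∈ S ↔ x ∈ H ∨ -x ∈ H) (hd : ∀ x ∈ H, -x ∉ H) (m : ℕ) :
    ((S.powersetCard m).filter (fun Y => NoAntipodal Y)).card = H.card.choose m * 2 ^ m := by
  have h1 : ((H.powersetCard m).sigma (fun T => T.powerset)).card = H.card.choose m * 2 ^ m := by
    rw [Finset.card_sigma, Finset.sum_congr rfl (g := fun _ => 2 ^ m)]
    · simp
    · intro T hT
      rw [Finset.card_powerset, (Finset.mem_powersetCard.1 hT).2]
  rw [← h1]
  have hcard : ∀ Y : Finset (Fin k → ℝ), Y ⊆ S → NoAntipodal Y →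
      (H.filter (fun x => x ∈ Y ∨ -x ∈ Y)).card = Y.card := by
    intro Y hY hA
    apply Finset.card_nbij' (fun x => if x ∈ Y then x else -x)
      (fun x => if x ∈ H then x else -x)
    · intro x hx
      simp only [Finset.coe_filter, Set.mem_ofPred_eq] at hx
      dsimp only
      split_ifs with h
      · exact h
      · exact hx.2.resolve_left h
    · intro y hy
      have := (hS y).1 (hY hy)
      simp only [Finset.coe_filter, Set.mem_ofPred_eq]
      have hy' : y ∈ Y := hy
      split_ifs with h
      · exact ⟨h, Or.inl hy'⟩
      · exact ⟨this.resolve_left h, Or.inr (by simpa using hy')⟩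
    · intro x hx
      simp only [Finset.coe_filter, Set.mem_ofPred_eq] at hx
      by_cases h : x ∈ Y
      · simp [h, hx.1]
      · simp [h, hd x hx.1]
    · intro y hy
      have hy' : y ∈ Y := hy
      by_cases h : y ∈ H
      · simp [h, hy']
      · simp [h, hA y hy']
  apply Finset.card_nbij' (fun Y => ⟨H.filter (fun x => x ∈ Y ∨ -x ∈ Y), H.filter (fun x => x ∈ Y)⟩)
    (fun p => S.filter (fun x => x ∈ p.2 ∨ (-x ∈ p.1 ∧ -x ∉ p.2)))
  · intro Y hY
    simp only [Finset.coe_filter, Finset.mem_powersetCard, Set.mem_ofPred_eq] at hY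
    obtain ⟨⟨hYS, hYm⟩, hA⟩ := hY
    simp only [Finset.mem_coe, Finset.mem_sigma, Finset.mem_powersetCard, Finset.mem_powerset]
    refine ⟨⟨Finset.filter_subset _ _, by rw [hcard Y hYS hA, hYm]⟩, ?_⟩
    intro x hx
    simp only [Finset.mem_filter] at hx ⊢
    tauto
  · rintro ⟨T, U⟩ hp
    simp only [Finset.mem_coe, Finset.mem_sigma, Finset.mem_powersetCard, Finset.mem_powerset] at hp
    obtain ⟨⟨hTH, hTm⟩, hUT⟩ := hp
    have hA : NoAntipodal (S.filter (fun x => x ∈ U ∨ (-x ∈ T ∧ -x ∉ U))) := by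
      intro y hy hy'
      simp only [Finset.mem_filter, neg_neg] at hy hy'
      rcases hy.2 with h | h
      · rcases hy'.2 with h' | h'
        · exact hd _ (hTH (hUT h)) (hTH (hUT h'))
        · exact h'.2 h
      · rcases hy'.2 with h' | h'
        · exact h.2 h'
        · exact hd _ (hTH h'.1) (hTH h.1)
    simp only [Finset.coe_filter, Finset.mem_powersetCard, Set.mem_ofPred_eq]
    refine ⟨⟨Finset.filter_subset _ _, ?_⟩, hA⟩
    rw [← hcard _ (Finset.filter_subset _ _) hA, ← hTm]
    congr 1
    ext x
    simp only [Finset.mem_filter, neg_neg, hS]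
    have a1 := hd x
    have a2 := @hTH x
    have a3 := @hTH (-x)
    have a4 := @hUT x
    have a5 := @hUT (-x)
    tauto
  · intro Y hY
    simp only [Finset.coe_filter, Finset.mem_powersetCard, Set.mem_ofPred_eq] at hY
    obtain ⟨⟨hYS, hYm⟩, hA⟩ := hY
    ext x
    simp only [Finset.mem_filter, neg_neg]
    have a1 := hd x
    have a2 := @hYS x
    have a3 := hA x
    have a4 := hS x
    tauto
  · rintro ⟨T, U⟩ hp
    simp only [Finset.mem_coe, Finset.mem_sigma, Finset.mem_powersetCard, Finset.mem_powerset] at hp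
    obtain ⟨⟨hTH, hTm⟩, hUT⟩ := hp
    have e1 : H.filter (fun x => x ∈ S.filter (fun x => x ∈ U ∨ (-x ∈ T ∧ -x ∉ U)) ∨
        -x ∈ S.filter (fun x => x ∈ U ∨ (-x ∈ T ∧ -x ∉ U))) = T := by
      ext x
      simp only [Finset.mem_filter, neg_neg, hS]
      have a1 := hd x
      have a2 := @hTH x
      have a3 := @hTH (-x)
      have a4 := @hUT x
      have a5 := @hUT (-x)
      tauto
    have e2 : H.filter (fun x => x ∈ S.filter (fun x => x ∈ U ∨ (-x ∈ T ∧ -x ∉ U))) = U := by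
      ext x
      simp only [Finset.mem_filter, hS]
      have a1 := hd x
      have a2 := @hTH x
      have a3 := @hTH (-x)
      have a4 := @hUT x
      tauto
    dsimp only
    rw [e1, e2]

theorem card_twice {k : ℕ} (S H : Finset (Fin k → ℝ))
    (hS : ∀ x, x ∈ S ↔ x ∈ H ∨ -x ∈ H) (hd : ∀ x ∈ H, -x ∉ H) :
    S.card = 2 * H.card := by
  have : S = H ∪ H.image (fun x => -x) := by
    ext x
    simp only [hS, Finset.mem_union, Finset.mem_image]
    constructor
    · rintro (h | h)
      · exact Or.inl h
      · exact Or.inr ⟨-x, h, neg_neg x⟩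
    · rintro (h | ⟨y, h, rfl⟩)
      · exact Or.inl h
      · exact Or.inr (by simpa using h)
  rw [this, Finset.card_union_of_disjoint, Finset.card_image_of_injective _ neg_injective]
  · ring
  · rw [Finset.disjoint_left]
    intro x hx hx'
    obtain ⟨y, hy, rfl⟩ := Finset.mem_image.1 hx'
    exact hd y hy hx

theorem mem_pmCube_iff {k : ℕ} (x : Fin k → ℝ) : x ∈ pmCube k ↔ ∀ i, x i = 1 ∨ x i = -1 := by
  simp only [pmCube, Finset.mem_image, Finset.mem_univ, true_and]
  constructor
  · rintro ⟨f, rfl⟩ i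
    dsimp only
    split_ifs <;> simp
  · intro h
    refine ⟨fun i => decide (x i = 1), ?_⟩
    funext i
    rcases h i with h | h <;> simp [h] <;> norm_num

theorem card_pmCube (k : ℕ) : (pmCube k).card = 2 ^ k := by
  rw [pmCube, Finset.card_image_of_injective]
  · simp
  · intro f g h
    funext i
    have := congrFun h i
    dsimp only at this
    cases hf : f i <;> cases hg : g i <;> simp [hf, hg] at this ⊢ <;> norm_num at this

theorem neg_mem_star {k : ℕ} (x : Fin k → ℝ) (hx : x ∈ pmCubeStar k) : -x ∈ pmCubeStar k := by
  simp only [pmCubeStar, Finset.mem_sdiff, mem_pmCube_iff, Finset.mem_insert,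
    Finset.mem_singleton, not_or, Pi.neg_apply] at hx ⊢
  refine ⟨fun i => ?_, fun h => hx.2.2 (neg_injective h), fun h => hx.2.1 ?_⟩
  · rcases hx.1 i with h | h <;> simp [h]
  · rw [← h, neg_neg]

theorem card_star (k : ℕ) : (pmCubeStar k).card = 2 ^ k - 2 := by
  have h1 : allOne k ∈ pmCube k := by simp [mem_pmCube_iff, allOne]
  have h2 : -allOne k ∈ pmCube k := by simp [mem_pmCube_iff, allOne]
  have hsub : ({-(allOne k), allOne k} : Finset (Fin k → ℝ)) ⊆ pmCube k := by
    intro x hx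
    simp only [Finset.mem_insert, Finset.mem_singleton] at hx
    rcases hx with rfl | rfl <;> assumption
  rw [pmCubeStar, Finset.card_sdiff_of_subset hsub, card_pmCube]
  rcases k with _ | k
  · have := Finset.card_pos.2 (⟨_, Finset.mem_insert_self (-(allOne 0)) {allOne 0}⟩)
    simp only [pow_zero]
    omega
  · rw [Finset.card_pair]
    intro h
    have := congrFun h 0
    simp [allOne] at this
    norm_num at this

theorem card_star_noAntipodal (k m : ℕ) :
    (((pmCubeStar k).powersetCard m).filter (fun Y => NoAntipodal Y)).card =
      (2 ^ (k - 1) - 1).choose m * 2 ^ m := by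
  obtain ⟨H, hS, hd⟩ : ∃ H : Finset (Fin k → ℝ),
      (∀ x, x ∈ pmCubeStar k ↔ x ∈ H ∨ -x ∈ H) ∧ (∀ x ∈ H, -x ∉ H) := by
    rcases k with _ | k
    · refine ⟨∅, ?_, by simp⟩
      have : pmCubeStar 0 = ∅ := by
        rw [← Finset.card_eq_zero, card_star]; norm_num
      simp [this]
    · refine ⟨(pmCubeStar (k + 1)).filter (fun x => x 0 = 1), ?_, ?_⟩
      · intro x
        simp only [Finset.mem_filter]
        constructor
        · intro hx
          have : x ∈ pmCube (k + 1) := (Finset.mem_sdiff.1 hx).1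
          rcases (mem_pmCube_iff x).1 this 0 with h | h
          · exact Or.inl ⟨hx, h⟩
          · exact Or.inr ⟨neg_mem_star x hx, by simp [h]⟩
        · rintro (h | h)
          · exact h.1
          · simpa using neg_mem_star _ h.1
      · intro x hx hx'
        have h1 := (Finset.mem_filter.1 hx).2
        have h2 := (Finset.mem_filter.1 hx').2
        rw [Pi.neg_apply, h1] at h2
        norm_num at h2
  have hc := card_twice _ H hS hd
  rw [card_star] at hc
  rw [card_noAntipodal _ H hS hd]
  have : H.card = 2 ^ (k - 1) - 1 := by
    rcases k with _ | k
    · simp at hc ⊢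
      exact hc
    · rw [pow_succ] at hc
      simp only [Nat.add_sub_cancel]
      omega
  rw [this]

theorem noAntipodal_of_empty {k : ℕ} (Y : Finset (Fin k → ℝ))
    (h : convexHull ℝ (Y : Set (Fin k → ℝ)) ∩ segment ℝ (-(allOne k)) (allOne k) = ∅) :
    NoAntipodal Y := by
  intro y hy hy'
  have key : ∀ z : Fin k → ℝ, (0 : Fin k → ℝ) ∈ segment ℝ (-z) z := by
    intro z
    refine ⟨1 / 2, 1 / 2, by norm_num, by norm_num, by norm_num, ?_⟩
    simp
  have h1 : (0 : Fin k → ℝ) ∈ convexHull ℝ (Y : Set (Fin k → ℝ)) :=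
    segment_subset_convexHull (Finset.mem_coe.2 hy') (Finset.mem_coe.2 hy) (key y)
  have : (0 : Fin k → ℝ) ∈ (∅ : Set (Fin k → ℝ)) := h ▸ ⟨h1, key _⟩
  exact this

-- STATEMENT 5
theorem statement5 (k m : ℕ) (hm : m ≤ 2 ^ k - 2) :
    tau k m = (((2 ^ (k - 1) - 1).choose m * 2 ^ m : ℕ) : ℝ) /
        (((2 ^ k - 2).choose m : ℕ) : ℝ) * alpha k m := by
  have hB := card_star_noAntipodal k m
  have hN : ((pmCubeStar k).powersetCard m).card = (2 ^ k - 2).choose m := by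
    rw [Finset.card_powersetCard, card_star]
  have hA : (((pmCubeStar k).powersetCard m).filter (fun (Y : Finset (Fin k → ℝ)) =>
      convexHull ℝ (Y : Set (Fin k → ℝ)) ∩ segment ℝ (-(allOne k)) (allOne k) = ∅ ∧
        NoAntipodal Y)) = (((pmCubeStar k).powersetCard m).filter (fun (Y : Finset (Fin k → ℝ)) =>
      convexHull ℝ (Y : Set (Fin k → ℝ)) ∩ segment ℝ (-(allOne k)) (allOne k) = ∅)) := by
    apply Finset.filter_congr
    intro Y _
    exact ⟨fun h => h.1, fun h => ⟨h, noAntipodal_of_empty Y h⟩⟩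
  have hle : (((pmCubeStar k).powersetCard m).filter (fun (Y : Finset (Fin k → ℝ)) =>
      convexHull ℝ (Y : Set (Fin k → ℝ)) ∩ segment ℝ (-(allOne k)) (allOne k) = ∅ ∧
        NoAntipodal Y)).card ≤ (2 ^ (k - 1) - 1).choose m * 2 ^ m := by
    rw [← hB]
    apply Finset.card_le_card
    intro Y hY
    rw [Finset.mem_filter] at hY ⊢
    exact ⟨hY.1, hY.2.2⟩
  have hT : (((pmCubeStar k).powersetCard m).filter (fun Y =>
      convexHull ℝ (Y : Set (Fin k → ℝ)) ∩ segment ℝ (-(allOne k)) (allOne k) = ∅)).card =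
      (((pmCubeStar k).powersetCard m).filter (fun (Y : Finset (Fin k → ℝ)) =>
      convexHull ℝ (Y : Set (Fin k → ℝ)) ∩ segment ℝ (-(allOne k)) (allOne k) = ∅)).card := by
    symm
    apply Finset.card_bij (fun (Y : Finset (Fin k → ℝ)) _ => (Y : Set (Fin k → ℝ)))
    · intro Y hY
      rw [Finset.mem_filter] at hY ⊢
      refine ⟨?_, hY.2⟩
      simp only [Finset.bind_def, Finset.pure_def, Finset.mem_sup, Finset.mem_singleton]
      exact ⟨Y, hY.1, rfl⟩
    · intro Y _ Z _ h
      exact Finset.coe_injective h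
    · intro W hW
      rw [Finset.mem_filter] at hW
      obtain ⟨h1, h2⟩ := hW
      simp only [Finset.bind_def, Finset.pure_def, Finset.mem_sup, Finset.mem_singleton] at h1
      obtain ⟨Y, hY, rfl⟩ := h1
      exact ⟨Y, Finset.mem_filter.2 ⟨hY, h2⟩, rfl⟩
  unfold tau alpha
  rw [hA] at hle ⊢
  rw [hT]
  rw [hN, hB]
  generalize (2 ^ (k - 1) - 1).choose m * 2 ^ m = B at *
  rcases Nat.eq_zero_or_pos B with h0 | h0
  · subst h0
    rw [Nat.le_zero.1 hle]
    simp
  · have : (B : ℝ) ≠ 0 := by positivity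
    field_simp

end
end

section
/- The map φ : ℝ^{r+1} → ℝ^r, given by orthogonal projection of ℝ^{r+1} onto the hyperplane H_𝟙 := {x ∈ ℝ^{r+1} : 𝟙ᵀx = 0} followed by the projection to the first r coordinates, is injective on C^{r+1}_* := {−1,+1}^{r+1} \ {−𝟙, 𝟙}. -/
open Finset Filter MeasureTheory

open scoped Classical

noncomputable section

theorem pmCubeStar_coord {d : ℕ} {x : Fin d → ℝ} (hx : x ∈ pmCubeStar d) :
    (∀ j, x j = 1 ∨ x j = -1) ∧ (¬ ∀ j, x j = 1) ∧ (¬ ∀ j, x j = -1) := by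
  unfold pmCubeStar at hx
  rw [Finset.mem_sdiff] at hx
  obtain ⟨h1, h2⟩ := hx
  refine ⟨?_, ?_, ?_⟩
  · intro j
    unfold pmCube at h1
    rw [Finset.mem_image] at h1
    obtain ⟨f, _, rfl⟩ := h1
    by_cases h : f j = true
    · left; simp [h]
    · right; simp [h]
  · intro h
    apply h2
    have : x = allOne d := funext h
    simp [this]
  · intro h
    apply h2
    have : x = -(allOne d) := funext h
    simp [this]

-- STATEMENT 7
theorem statement7 (r : ℕ) :
    Set.InjOn (phi r) ((pmCubeStar (r + 1) : Finset (Fin (r + 1) → ℝ)) : Set (Fin (r + 1) → ℝ)) := by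
  intro x hx y hy hxy
  obtain ⟨hx1, hx2, hx3⟩ := pmCubeStar_coord (Finset.mem_coe.mp hx)
  obtain ⟨hy1, hy2, hy3⟩ := pmCubeStar_coord (Finset.mem_coe.mp hy)
  obtain ⟨c, hc⟩ : ∃ c : ℝ, c = (∑ j, x j) / (r + 1 : ℝ) - (∑ j, y j) / (r + 1 : ℝ) := ⟨_, rfl⟩
  have hr : (r + 1 : ℝ) ≠ 0 := by positivity
  have h1 : ∀ i : Fin r, x i.castSucc - y i.castSucc = c := by
    intro i
    have h := congrFun hxy i
    simp only [phi] at h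
    linarith
  have h2 : (∑ j, x j) - (∑ j, y j) = (r + 1 : ℝ) * c := by
    rw [hc]; field_simp
  have h3 : x (Fin.last r) - y (Fin.last r) = c := by
    rw [← Finset.sum_sub_distrib, Fin.sum_univ_castSucc] at h2
    simp only [h1, Finset.sum_const, Finset.card_univ, Fintype.card_fin, nsmul_eq_mul] at h2
    linarith
  have h4 : ∀ j, x j - y j = c := fun j => Fin.lastCases h3 h1 j
  have h0 := h4 0
  rcases hx1 0 with a | a <;> rcases hy1 0 with b | b <;> rw [a, b] at h0
  · funext j; linarith [h4 j]
  · exfalso; apply hx2; intro j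
    rcases hx1 j with e | e
    · exact e
    · rcases hy1 j with g | g <;> linarith [h4 j]
  · exfalso; apply hx3; intro j
    rcases hx1 j with e | e
    · rcases hy1 j with g | g <;> linarith [h4 j]
    · exact e
  · funext j; linarith [h4 j]


end
end
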